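/- arXiv:0903.2992 — 3 statements merged into one kernel-verified Lean document; each statement's English description precedes it below -/
import Mathlib

section
/- Let Γ be of type A_∞, Λ = Σ λ_i·i ∈ ℕ[I], and i = i_1…i_r…i_m ∈ Seq(ν). Then the nilpotency degree of x_{r,i} in the cyclotomic quotient R_ν^Λ is at most the r-antigravity bound b_r = Σ_{j ∈ Supp(a_r(i))} λ_j, i.e. x_{r,i}^{b_r} = 0 in R_ν^Λ. -/
namespace KLRPaper


/-- The sequence obtained from `i` by swapping the entries in positions `r` and `r+1`
(0-indexed); identity if `r+1` is out of range. -/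
def swapSeq {I : Type} {m : ℕ} (r : ℕ) (i : Fin m → I) : Fin m → I :=
  fun k =>
    if h : r + 1 < m then
      i (Equiv.swap (⟨r, Nat.lt_of_succ_lt h⟩ : Fin m) (⟨r + 1, h⟩ : Fin m) k)
    else i k

/-- The Khovanov–Lauda–Rouquier algebra of a simply-laced quiver with vertex set `I`
and adjacency relation `adj`, on `m` strands, presented by its generators
(idempotents `e i`, dots `x r i`, crossings `δ r i`) and the KLR relations. -/
structure KLR (I : Type) [DecidableEq I] (adj : I → I → Prop) (m : ℕ)
    (A : Type) [Ring A] where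
  e : (Fin m → I) → A
  x : Fin m → (Fin m → I) → A
  δ : ℕ → (Fin m → I) → A
  e_mul_e : ∀ i j, e i * e j = if i = j then e i else 0
  e_mul_x : ∀ r i, e i * x r i = x r i
  x_mul_e : ∀ r i, x r i * e i = x r i
  x_mul_x : ∀ r s i, x r i * x s i = x s i * x r i
  e_mul_δ : ∀ (r : ℕ) (i : Fin m → I), e (swapSeq r i) * δ r i = δ r i
  δ_mul_e : ∀ (r : ℕ) (i : Fin m → I), δ r i * e i = δ r i
  δδ_same : ∀ (r : ℕ) (h : r + 1 < m) (i : Fin m → I),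
    i ⟨r, Nat.lt_of_succ_lt h⟩ = i ⟨r + 1, h⟩ →
    δ r (swapSeq r i) * δ r i = 0
  δδ_orth : ∀ (r : ℕ) (h : r + 1 < m) (i : Fin m → I),
    i ⟨r, Nat.lt_of_succ_lt h⟩ ≠ i ⟨r + 1, h⟩ →
    ¬ adj (i ⟨r, Nat.lt_of_succ_lt h⟩) (i ⟨r + 1, h⟩) →
    δ r (swapSeq r i) * δ r i = e i
  δδ_adj : ∀ (r : ℕ) (h : r + 1 < m) (i : Fin m → I),
    adj (i ⟨r, Nat.lt_of_succ_lt h⟩) (i ⟨r + 1, h⟩) →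
    δ r (swapSeq r i) * δ r i = x ⟨r, Nat.lt_of_succ_lt h⟩ i + x ⟨r + 1, h⟩ i
  δx_far : ∀ (r : ℕ) (s : Fin m) (i : Fin m → I), s.val ≠ r → s.val ≠ r + 1 →
    δ r i * x s i = x s (swapSeq r i) * δ r i
  δx_diff1 : ∀ (r : ℕ) (h : r + 1 < m) (i : Fin m → I),
    i ⟨r, Nat.lt_of_succ_lt h⟩ ≠ i ⟨r + 1, h⟩ →
    δ r i * x ⟨r, Nat.lt_of_succ_lt h⟩ i = x ⟨r + 1, h⟩ (swapSeq r i) * δ r i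
  δx_diff2 : ∀ (r : ℕ) (h : r + 1 < m) (i : Fin m → I),
    i ⟨r, Nat.lt_of_succ_lt h⟩ ≠ i ⟨r + 1, h⟩ →
    δ r i * x ⟨r + 1, h⟩ i = x ⟨r, Nat.lt_of_succ_lt h⟩ (swapSeq r i) * δ r i
  δx_same1 : ∀ (r : ℕ) (h : r + 1 < m) (i : Fin m → I),
    i ⟨r, Nat.lt_of_succ_lt h⟩ = i ⟨r + 1, h⟩ →
    δ r i * x ⟨r, Nat.lt_of_succ_lt h⟩ i - x ⟨r + 1, h⟩ (swapSeq r i) * δ r i = e i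
  δx_same2 : ∀ (r : ℕ) (h : r + 1 < m) (i : Fin m → I),
    i ⟨r, Nat.lt_of_succ_lt h⟩ = i ⟨r + 1, h⟩ →
    x ⟨r, Nat.lt_of_succ_lt h⟩ (swapSeq r i) * δ r i - δ r i * x ⟨r + 1, h⟩ i = e i
  braid_easy : ∀ (r : ℕ) (h : r + 2 < m) (i : Fin m → I),
    ¬ (i ⟨r, by omega⟩ = i ⟨r + 2, h⟩ ∧ adj (i ⟨r, by omega⟩) (i ⟨r + 1, by omega⟩)) →
    δ r (swapSeq (r + 1) (swapSeq r i)) * δ (r + 1) (swapSeq r i) * δ r i =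
      δ (r + 1) (swapSeq r (swapSeq (r + 1) i)) * δ r (swapSeq (r + 1) i) * δ (r + 1) i
  braid_hard : ∀ (r : ℕ) (h : r + 2 < m) (i : Fin m → I),
    i ⟨r, by omega⟩ = i ⟨r + 2, h⟩ → adj (i ⟨r, by omega⟩) (i ⟨r + 1, by omega⟩) →
    δ r (swapSeq (r + 1) (swapSeq r i)) * δ (r + 1) (swapSeq r i) * δ r i -
      δ (r + 1) (swapSeq r (swapSeq (r + 1) i)) * δ r (swapSeq (r + 1) i) * δ (r + 1) i
      = e i

/-- The cyclotomic quotient `R_ν^Λ` of the KLR algebra at the dominant weight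
`Λ = Σ λ_i · i` (a finitely supported function `I →₀ ℕ`): it additionally satisfies
`x_{1,i}^{λ_{i₁}} 1_i = 0` for every sequence `i`. -/
structure CycKLR (I : Type) [DecidableEq I] (adj : I → I → Prop) (m : ℕ)
    (A : Type) [Ring A] (Λ : I →₀ ℕ) extends KLR I adj m A where
  cyc : ∀ (h : 0 < m) (i : Fin m → I), x ⟨0, h⟩ i ^ Λ (i ⟨0, h⟩) * e i = 0



/-- Adjacency for the type `A_∞` quiver with vertex set `ℤ`. -/
def adjZ (u v : ℤ) : Prop := (u - v).natAbs = 1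

/-- The heap covering relation for the bead-and-runner diagram of the sequence `l`
(type `A_∞`): bead `a` is directly below bead `b` if it was placed earlier and its
runner is at distance at most one from the runner of `b`. -/
def HeapRel (l : List ℤ) (a b : ℕ) : Prop :=
  a < b ∧ b < l.length ∧ (l.getD a 0 - l.getD b 0).natAbs ≤ 1

/-- Bead `k` is trapped below the anchored bead `r` in antigravity: there is a chain
of beads from `k` up to `r`, each step going to a later bead on the same or an
adjacent runner. -/
def Trapped (l : List ℤ) (r k : ℕ) : Prop :=
  Relation.ReflTransGen (HeapRel l) k r

open Classical in
/-- The support of the `r`-stable antigravity configuration `a_r(l)`: the set of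
runners carrying a bead trapped below the anchored bead `r`. -/
noncomputable def trappedRunners (l : List ℤ) (r : ℕ) : Finset ℤ :=
  ((Finset.range l.length).filter fun k => Trapped l r k).image fun k => l.getD k 0

/-- The `r`-antigravity bound `b_r = Σ_{j ∈ Supp(a_r(l))} λ_j`. -/
noncomputable def agBound (Λ : ℤ →₀ ℕ) (l : List ℤ) (r : ℕ) : ℕ :=
  ∑ j ∈ trappedRunners l r, Λ j


/-! ## List-indexed words -/

/-- The word attached to a list. -/
def wd (m : ℕ) (L : List ℤ) : Fin m → ℤ := fun k => L.getD k.val 0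

/-- `L'` is `L` with the letters `p q` at positions `k, k+1` exchanged. -/
def Sw (m k : ℕ) (p q : ℤ) (L L' : List ℤ) : Prop :=
  ∃ u v : List ℤ, L = u ++ p :: q :: v ∧ L' = u ++ q :: p :: v ∧ u.length = k ∧ k + 1 < m

theorem Sw.symm {m k : ℕ} {p q : ℤ} {L L' : List ℤ} (h : Sw m k p q L L') :
    Sw m k q p L' L := by
  obtain ⟨u, v, h1, h2, h3, h4⟩ := h
  exact ⟨u, v, h2, h1, h3, h4⟩

theorem Sw.lt {m k : ℕ} {p q : ℤ} {L L' : List ℤ} (h : Sw m k p q L L') : k + 1 < m := by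
  obtain ⟨u, v, h1, h2, h3, h4⟩ := h
  exact h4

theorem Sw.fst {m k : ℕ} {p q : ℤ} {L L' : List ℤ} (h : Sw m k p q L L') :
    wd m L ⟨k, Nat.lt_of_succ_lt h.lt⟩ = p := by
  obtain ⟨u, v, rfl, h2, rfl, h4⟩ := h
  simp [wd]

theorem Sw.snd {m k : ℕ} {p q : ℤ} {L L' : List ℤ} (h : Sw m k p q L L') :
    wd m L ⟨k + 1, h.lt⟩ = q := by
  obtain ⟨u, v, rfl, h2, rfl, h4⟩ := h
  simp [wd]

theorem Sw.swap {m k : ℕ} {p q : ℤ} {L L' : List ℤ} (h : Sw m k p q L L') :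
    swapSeq k (wd m L) = wd m L' := by
  have hs := h.symm
  funext j
  have hlt := h.lt
  unfold swapSeq
  rw [dif_pos hlt]
  by_cases h1 : j = ⟨k, Nat.lt_of_succ_lt hlt⟩
  · subst h1
    rw [Equiv.swap_apply_left, h.snd, hs.fst]
  by_cases h2 : j = ⟨k + 1, hlt⟩
  · subst h2
    rw [Equiv.swap_apply_right, h.fst, hs.snd]
  rw [Equiv.swap_apply_of_ne_of_ne h1 h2]
  obtain ⟨u, v, rfl, rfl, rfl, h4⟩ := h
  obtain ⟨j, hj⟩ := j
  simp only [Fin.mk.injEq] at h1 h2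
  simp only [wd]
  rcases lt_or_ge j u.length with hl | hl
  · simp [List.getElem?_append_left hl]
  · obtain ⟨c, rfl⟩ : ∃ c, j = u.length + 2 + c := ⟨j - u.length - 2, by omega⟩
    have : u.length + 2 + c - u.length = c + 2 := by omega
    simp [List.getElem?_append_right hl, this]

/-- Complete homogeneous polynomial of degree `N-1` in two variables. -/
def hh {A : Type} [Ring A] (N : ℕ) (a b : A) : A :=
  ∑ i ∈ Finset.range N, a ^ i * b ^ (N - 1 - i)

theorem hh_semi {A : Type} [Ring A] (N : ℕ) {d a b a' b' : A} (h1 : d * a' = a * d)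
    (h2 : d * b' = b * d) : d * hh N a' b' = hh N a b * d := by
  unfold hh
  rw [Finset.mul_sum, Finset.sum_mul]
  refine Finset.sum_congr rfl fun i _ => ?_
  have h3 : SemiconjBy d a' a := h1
  have h4 : SemiconjBy d b' b := h2
  exact (h3.pow_right i).mul_right (h4.pow_right _)

theorem hh_comm {A : Type} [Ring A] (N : ℕ) {a b c : A} (h1 : Commute c a)
    (h2 : Commute c b) : Commute c (hh N a b) :=
  hh_semi N h1.eq h2.eq

theorem hh_mul {A : Type} [Ring A] (N : ℕ) {a b : A} (h : Commute a b) :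
    hh N a b * (a - b) = a ^ N - b ^ N := h.geom_sum₂_mul N

theorem hh_succ {A : Type} [Ring A] (N : ℕ) {a b : A} (h : Commute a b) :
    hh (N + 1) a b = b ^ N + hh N a b * a := by
  unfold hh
  rw [Finset.sum_range_succ']
  simp only [Nat.add_sub_cancel, pow_zero, one_mul, Nat.sub_zero, add_comm _ (b ^ N)]
  congr 1
  rw [Finset.sum_mul]
  refine Finset.sum_congr rfl fun i _ => ?_
  have e : N - (i + 1) = N - 1 - i := by omega
  rw [e, pow_succ, mul_assoc, mul_assoc, (h.pow_right (N - 1 - i)).eq]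

section Alg

variable {m : ℕ} {A : Type} [Ring A] {Λ : ℤ →₀ ℕ} (K : CycKLR ℤ adjZ m A Λ)

/-- idempotent of a list -/
def EE (L : List ℤ) : A := K.e (wd m L)

/-- crossing of a list -/
def DD (k : ℕ) (L : List ℤ) : A := K.δ k (wd m L)

/-- dot of a list -/
def XX (k : ℕ) (L : List ℤ) : A := if h : k < m then K.x ⟨k, h⟩ (wd m L) else 0

theorem E_E (L : List ℤ) : EE K L * EE K L = EE K L := by
  simp [EE, K.e_mul_e]

theorem E_X (k : ℕ) (L : List ℤ) : EE K L * XX K k L = XX K k L := by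
  unfold EE XX
  split_ifs with h
  · exact K.e_mul_x _ _
  · simp

theorem X_E (k : ℕ) (L : List ℤ) : XX K k L * EE K L = XX K k L := by
  unfold EE XX
  split_ifs with h
  · exact K.x_mul_e _ _
  · simp

theorem X_X (j k : ℕ) (L : List ℤ) : Commute (XX K j L) (XX K k L) := by
  unfold XX
  split_ifs with h h'
  · exact K.x_mul_x _ _ _
  all_goals simp [Commute.zero_left, Commute.zero_right]

theorem X_Ec (k : ℕ) (L : List ℤ) : Commute (XX K k L) (EE K L) := by
  rw [Commute, SemiconjBy, E_X, X_E]

theorem D_E (k : ℕ) (L : List ℤ) : DD K k L * EE K L = DD K k L := K.δ_mul_e _ _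

variable {k : ℕ} {p q : ℤ} {L L' : List ℤ}

theorem E_D (h : Sw m k p q L L') : EE K L' * DD K k L = DD K k L := by
  have := K.e_mul_δ k (wd m L)
  rwa [h.swap] at this

theorem D_D_same (h : Sw m k p p L L') : DD K k L' * DD K k L = 0 := by
  have := K.δδ_same k h.lt (wd m L) (by rw [h.fst, h.snd])
  rwa [h.swap] at this

theorem D_D_orth (h : Sw m k p q L L') (ho : 2 ≤ (p - q).natAbs) :
    DD K k L' * DD K k L = EE K L := by
  have := K.δδ_orth k h.lt (wd m L) (by rw [h.fst, h.snd]; omega)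
    (by rw [h.fst, h.snd, adjZ]; omega)
  rwa [h.swap] at this

theorem D_D_adj (h : Sw m k p q L L') (ho : (p - q).natAbs = 1) :
    DD K k L' * DD K k L = XX K k L + XX K (k + 1) L := by
  have hl := h.lt
  have := K.δδ_adj k h.lt (wd m L) (by rw [h.fst, h.snd, adjZ]; exact ho)
  rw [h.swap] at this
  unfold XX
  rw [dif_pos hl, dif_pos (Nat.lt_of_succ_lt hl)]
  exact this

theorem D_X_far (h : Sw m k p q L L') (j : ℕ) (h1 : j ≠ k) (h2 : j ≠ k + 1) :
    DD K k L * XX K j L = XX K j L' * DD K k L := by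
  unfold XX
  split_ifs with hj
  · have := K.δx_far k ⟨j, hj⟩ (wd m L) h1 h2
    rwa [h.swap] at this
  · simp

theorem D_X_1 (h : Sw m k p q L L') (hpq : p ≠ q) :
    DD K k L * XX K k L = XX K (k + 1) L' * DD K k L := by
  have hl := h.lt
  have := K.δx_diff1 k h.lt (wd m L) (by rwa [h.fst, h.snd])
  rw [h.swap] at this
  unfold XX
  rw [dif_pos hl, dif_pos (Nat.lt_of_succ_lt hl)]
  exact this

theorem D_X_2 (h : Sw m k p q L L') (hpq : p ≠ q) :
    DD K k L * XX K (k + 1) L = XX K k L' * DD K k L := by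
  have hl := h.lt
  have := K.δx_diff2 k h.lt (wd m L) (by rwa [h.fst, h.snd])
  rw [h.swap] at this
  unfold XX
  rw [dif_pos hl, dif_pos (Nat.lt_of_succ_lt hl)]
  exact this

theorem Sw.self (h : Sw m k p p L L') : L' = L := by
  obtain ⟨u, v, h1, h2, h3, h4⟩ := h
  rw [h1, h2]

theorem D_X_s1 (h : Sw m k p p L L) :
    DD K k L * XX K k L = XX K (k + 1) L * DD K k L + EE K L := by
  have hl := h.lt
  have := K.δx_same1 k h.lt (wd m L) (by rw [h.fst, h.snd])
  rw [h.swap, sub_eq_iff_eq_add] at this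
  unfold XX
  rw [dif_pos hl, dif_pos (Nat.lt_of_succ_lt hl), add_comm]
  exact this

theorem D_X_s2 (h : Sw m k p p L L) :
    DD K k L * XX K (k + 1) L = XX K k L * DD K k L - EE K L := by
  have hl := h.lt
  have := K.δx_same2 k h.lt (wd m L) (by rw [h.fst, h.snd])
  rw [h.swap, sub_eq_iff_eq_add] at this
  unfold XX
  rw [dif_pos hl, dif_pos (Nat.lt_of_succ_lt hl)]
  exact (sub_eq_of_eq_add' this).symm

theorem braidL (u v : List ℤ) (p a : ℤ) (hl : u.length + 2 < m) (ho : (p - a).natAbs = 1) :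
    EE K (u ++ p :: a :: p :: v) =
      DD K u.length (u ++ a :: p :: p :: v) * DD K (u.length + 1) (u ++ a :: p :: p :: v) *
        DD K u.length (u ++ p :: a :: p :: v) -
      DD K (u.length + 1) (u ++ p :: p :: a :: v) * DD K u.length (u ++ p :: p :: a :: v) *
        DD K (u.length + 1) (u ++ p :: a :: p :: v) := by
  have s1 : Sw m u.length p a (u ++ p :: a :: p :: v) (u ++ a :: p :: p :: v) :=
    ⟨u, p :: v, rfl, rfl, rfl, by omega⟩
  have s2 : Sw m (u.length + 1) p p (u ++ a :: p :: p :: v) (u ++ a :: p :: p :: v) :=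
    ⟨u ++ [a], v, by simp, by simp, by simp, by omega⟩
  have s3 : Sw m (u.length + 1) a p (u ++ p :: a :: p :: v) (u ++ p :: p :: a :: v) :=
    ⟨u ++ [p], v, by simp, by simp, by simp, by omega⟩
  have s4 : Sw m u.length p p (u ++ p :: p :: a :: v) (u ++ p :: p :: a :: v) :=
    ⟨u, a :: v, rfl, rfl, rfl, by omega⟩
  have := K.braid_hard u.length hl (wd m (u ++ p :: a :: p :: v))
    (by rw [s1.fst]; exact s3.snd.symm) (by rw [s1.fst]; erw [s1.snd]; exact ho)
  rw [s1.swap, s2.swap, s3.swap, s4.swap] at this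
  exact this.symm

/-- Stacked equal letters. -/
theorem hh_stack (N : ℕ) (h : Sw m k p p L L) (hz : XX K k L ^ N * EE K L = 0) :
    hh N (XX K k L) (XX K (k + 1) L) * EE K L = 0 := by
  have key : ∀ n, DD K k L * XX K k L ^ n =
      XX K (k + 1) L ^ n * DD K k L + hh n (XX K k L) (XX K (k + 1) L) * EE K L := by
    intro n
    induction n with
    | zero => simp [hh]
    | succ n ih =>
      rw [pow_succ, ← mul_assoc, ih, add_mul, mul_assoc, D_X_s1 K h, hh_succ n (X_X K _ _ L),
        mul_assoc (hh n _ _), E_X, pow_succ, mul_add, add_mul, ← mul_assoc, mul_assoc (hh n _ _),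
        X_E, add_assoc]
  have h1 : hh N (XX K k L) (XX K (k + 1) L) * DD K k L = 0 := by
    have h2 := key N
    have h3 : DD K k L * XX K k L ^ N * DD K k L = 0 := by
      rw [← E_D K h, mul_assoc, ← mul_assoc (_ ^ N), hz, zero_mul, mul_zero]
    rw [h2, add_mul, mul_assoc, D_D_same K h, mul_zero, zero_add, mul_assoc, E_D K h] at h3
    exact h3
  have h2 : EE K L = DD K k L * XX K k L - XX K (k + 1) L * DD K k L := by
    rw [D_X_s1 K h]; abel
  rw [h2, mul_sub, ← mul_assoc, h1, zero_mul, ← mul_assoc,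
    ← (hh_comm N (X_X K _ _ L) (X_X K _ _ L)).eq, mul_assoc, h1, mul_zero, sub_zero]

/-- Letters `t s t`. -/
theorem hh_tst (N : ℕ) (u v : List ℤ) (t s : ℤ) (hl : u.length + 2 < m)
    (ho : (t - s).natAbs = 1)
    (hz1 : XX K (u.length + 1) (u ++ s :: t :: t :: v) ^ N * EE K (u ++ s :: t :: t :: v) = 0)
    (hz2 : XX K u.length (u ++ t :: t :: s :: v) ^ N * EE K (u ++ t :: t :: s :: v) = 0) :
    hh N (XX K u.length (u ++ t :: s :: t :: v)) (XX K (u.length + 2) (u ++ t :: s :: t :: v)) *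
      EE K (u ++ t :: s :: t :: v) = 0 := by
  have s1 : Sw m u.length t s (u ++ t :: s :: t :: v) (u ++ s :: t :: t :: v) :=
    ⟨u, t :: v, rfl, rfl, rfl, by omega⟩
  have s2 : Sw m (u.length + 1) t t (u ++ s :: t :: t :: v) (u ++ s :: t :: t :: v) :=
    ⟨u ++ [s], v, by simp, by simp, by simp, by omega⟩
  have s3 : Sw m (u.length + 1) s t (u ++ t :: s :: t :: v) (u ++ t :: t :: s :: v) :=
    ⟨u ++ [t], v, by simp, by simp, by simp, by omega⟩
  have s4 : Sw m u.length t t (u ++ t :: t :: s :: v) (u ++ t :: t :: s :: v) :=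
    ⟨u, s :: v, rfl, rfl, rfl, by omega⟩
  have hne : t ≠ s := by omega
  have a1 := hh_stack K N s2 hz1
  have a2 := hh_stack K N s4 hz2
  have b1 := hh_semi N (D_X_2 K s1.symm hne.symm) (D_X_far K s1.symm (u.length + 2) (by omega) (by omega))
  have b2 := hh_semi N (D_X_far K s3.symm u.length (by omega) (by omega)) (D_X_1 K s3.symm hne)
  rw [braidL K u v t s hl ho, mul_sub, ← mul_assoc, ← mul_assoc, ← mul_assoc, ← mul_assoc]
  have c1 : hh N (XX K u.length (u ++ t :: s :: t :: v))
      (XX K (u.length + 2) (u ++ t :: s :: t :: v)) * DD K u.length (u ++ s :: t :: t :: v) = 0 := by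
    rw [← D_E, ← mul_assoc, ← b1, mul_assoc, a1, mul_zero]
  have c2 : hh N (XX K u.length (u ++ t :: s :: t :: v))
      (XX K (u.length + 2) (u ++ t :: s :: t :: v)) * DD K (u.length + 1) (u ++ t :: t :: s :: v) = 0 := by
    rw [← D_E, ← mul_assoc, ← b2, mul_assoc, a2, mul_zero]
  rw [c1, c2]; simp

/-- Transport of vanishing along an adjacent pair. -/
theorem hh_adj_left (N : ℕ) {a b : A} {a' b' : A} (h : Sw m k p q L L') (hadj : (p - q).natAbs = 1)
    (h1 : DD K k L' * a' = a * DD K k L') (h2 : DD K k L' * b' = b * DD K k L')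
    (hz : hh N a' b' * EE K L' = 0) :
    hh N a b * (XX K k L + XX K (k + 1) L) = 0 := by
  rw [← D_D_adj K h hadj, ← mul_assoc, ← D_E K k L', ← mul_assoc, ← hh_semi N h1 h2,
    mul_assoc (DD K k L'), hz, mul_zero, zero_mul]

/-- Letters `t a b t`. -/
theorem hh_sq (N : ℕ) (u v : List ℤ) (t a b : ℤ) (hl : u.length + 3 < m)
    (ha : (t - a).natAbs = 1) (hb : (t - b).natAbs = 1) (hab : 2 ≤ (a - b).natAbs)
    (z1 : XX K (u.length + 1) (u ++ a :: t :: t :: b :: v) ^ N * EE K (u ++ a :: t :: t :: b :: v) = 0)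
    (z2 : XX K u.length (u ++ t :: t :: a :: b :: v) ^ N * EE K (u ++ t :: t :: a :: b :: v) = 0)
    (z3 : XX K (u.length + 2) (u ++ b :: a :: t :: t :: v) ^ N * EE K (u ++ b :: a :: t :: t :: v) = 0)
    (z4 : XX K (u.length + 1) (u ++ b :: t :: t :: a :: v) ^ N * EE K (u ++ b :: t :: t :: a :: v) = 0) :
    hh N (XX K u.length (u ++ t :: a :: b :: t :: v)) (XX K (u.length + 3) (u ++ t :: a :: b :: t :: v)) *
      (XX K u.length (u ++ t :: a :: b :: t :: v) - XX K (u.length + 3) (u ++ t :: a :: b :: t :: v)) = 0 := by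
  have hta : t ≠ a := by omega
  have htb : t ≠ b := by omega
  -- `h (x_2 + x_3) = 0`
  have s1 : Sw m (u.length + 2) b t (u ++ t :: a :: b :: t :: v) (u ++ t :: a :: t :: b :: v) :=
    ⟨u ++ [t, a], v, by simp, by simp, by simp, by omega⟩
  have a1 := hh_tst K N u (b :: v) t a (by omega) ha z1 z2
  have r1 := hh_adj_left K N s1 (by omega) (D_X_far K s1.symm u.length (by omega) (by omega))
    (D_X_1 K s1.symm htb) a1
  -- `h (x_0 + x_b) = 0` at `t b a t`
  have s2 : Sw m u.length t b (u ++ t :: b :: a :: t :: v) (u ++ b :: t :: a :: t :: v) :=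
    ⟨u, a :: t :: v, rfl, rfl, rfl, by omega⟩
  have a2 := hh_tst K N (u ++ [b]) v t a (by simp; omega) ha (by simpa using z3) (by simpa using z4)
  simp only [List.length_append, List.length_cons, List.length_nil, List.append_assoc,
    List.cons_append, List.nil_append, zero_add] at a2
  have r2 := hh_adj_left K N s2 hb (D_X_2 K s2.symm htb.symm)
    (D_X_far K s2.symm (u.length + 1 + 2) (by omega) (by omega)) a2
  have s3 : Sw m (u.length + 1) a b (u ++ t :: a :: b :: t :: v) (u ++ t :: b :: a :: t :: v) :=
    ⟨u ++ [t], t :: v, by simp, by simp, by simp, by omega⟩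
  have c0 := D_X_far K s3 u.length (by omega) (by omega)
  have c3 := D_X_far K s3 (u.length + 3) (by omega) (by omega)
  have c2 := D_X_2 K s3 (by omega)
  have ch := hh_semi N c0 c3
  have r3 : DD K (u.length + 1) (u ++ t :: a :: b :: t :: v) *
      (hh N (XX K u.length (u ++ t :: a :: b :: t :: v)) (XX K (u.length + 3) (u ++ t :: a :: b :: t :: v)) *
      (XX K u.length (u ++ t :: a :: b :: t :: v) + XX K (u.length + 2) (u ++ t :: a :: b :: t :: v))) = 0 := by
    rw [← mul_assoc, ch, mul_assoc, mul_add, c0, c2, ← add_mul, ← mul_assoc, r2, zero_mul]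
  have r4 : hh N (XX K u.length (u ++ t :: a :: b :: t :: v)) (XX K (u.length + 3) (u ++ t :: a :: b :: t :: v)) *
      (XX K u.length (u ++ t :: a :: b :: t :: v) + XX K (u.length + 2) (u ++ t :: a :: b :: t :: v)) = 0 := by
    have := congrArg (fun z => DD K (u.length + 1) (u ++ t :: b :: a :: t :: v) * z) r3
    simp only [mul_zero] at this
    rw [← mul_assoc, D_D_orth K s3 hab, ← mul_assoc,
      (hh_comm N (X_Ec K _ _).symm (X_Ec K _ _).symm).eq, mul_assoc, mul_add, E_X, E_X] at this
    exact this
  have e1 : XX K u.length (u ++ t :: a :: b :: t :: v) - XX K (u.length + 3) (u ++ t :: a :: b :: t :: v)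
    = (XX K u.length (u ++ t :: a :: b :: t :: v) + XX K (u.length + 2) (u ++ t :: a :: b :: t :: v)) -
      (XX K (u.length + 2) (u ++ t :: a :: b :: t :: v) + XX K (u.length + 3) (u ++ t :: a :: b :: t :: v)) := by
    abel
  rw [e1, mul_sub, r4, r1, sub_zero]

end Alg

section KillSec

variable {m : ℕ} {A : Type} [Ring A] {Λ : ℤ →₀ ℕ} (K : CycKLR ℤ adjZ m A Λ)

theorem hh_fin (N : ℕ) {L : List ℤ} (j k : ℕ)
    (h : hh N (XX K j L) (XX K k L) * EE K L = 0) (hz : XX K j L ^ N * EE K L = 0) :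
    XX K k L ^ N * EE K L = 0 := by
  have h1 := hh_mul N (X_X K j k L)
  have h2 : (XX K j L ^ N - XX K k L ^ N) * EE K L = 0 := by
    rw [← h1, mul_assoc, (((X_Ec K j L).sub_left (X_Ec K k L))).eq, ← mul_assoc, h, zero_mul]
  rw [sub_mul, hz, zero_sub, neg_eq_zero] at h2
  exact h2

theorem pass0 (N : ℕ) {k : ℕ} {L' : List ℤ} {Y Y' : A}
    (hc : DD K k L' * Y' = Y * DD K k L') (hz : Y' ^ N * EE K L' = 0) :
    Y ^ N * DD K k L' = 0 := by
  have h3 : SemiconjBy (DD K k L') Y' Y := hc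
  rw [← D_E K k L', ← mul_assoc, ← (h3.pow_right N).eq, mul_assoc, hz, mul_zero]

/-- The induction hypothesis: vanishing for earlier dots. -/
def IHf (N r : ℕ) (S : Finset ℤ) : Prop :=
  ∀ (w : List ℤ) (t : ℤ) (rest : List ℤ), w.length < r → w.length + 1 + rest.length = m →
    (∀ x ∈ w, x ∈ S) → t ∈ S →
    XX K w.length (w ++ t :: rest) ^ N * EE K (w ++ t :: rest) = 0

/-- The word `w`, followed by `t :: rest`, is killed by the `N`-th power of the dot on `t`. -/
def Kill (N r : ℕ) (t : ℤ) (rest : List ℤ) (S : Finset ℤ) (w : List ℤ) : Prop :=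
  w.length = r → (∀ x ∈ w, x ∈ S) →
    XX K r (w ++ t :: rest) ^ N * EE K (w ++ t :: rest) = 0

variable {N r : ℕ} {t : ℤ} {rest : List ℤ} {S : Finset ℤ}

theorem kill_orth (hm : r + 1 + rest.length = m) (u v : List ℤ) (p q : ℤ)
    (ho : 2 ≤ (p - q).natAbs) (h : Kill K N r t rest S (u ++ q :: p :: v)) :
    Kill K N r t rest S (u ++ p :: q :: v) := by
  intro hr hS
  simp only [List.length_append, List.length_cons] at hr
  have hz := h (by simp; omega) (by intro x hx; apply hS; simp at hx ⊢; tauto)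
  simp only [List.append_assoc, List.cons_append] at hz ⊢
  have s : Sw m u.length p q (u ++ p :: q :: (v ++ t :: rest)) (u ++ q :: p :: (v ++ t :: rest)) :=
    ⟨u, _, rfl, rfl, rfl, by omega⟩
  rw [← D_D_orth K s ho, ← mul_assoc,
    pass0 K N (D_X_far K s.symm r (by omega) (by omega)) hz, zero_mul]

theorem kill_braid (hm : r + 1 + rest.length = m) (u v : List ℤ) (p a : ℤ)
    (ho : (p - a).natAbs = 1) (h1 : Kill K N r t rest S (u ++ a :: p :: p :: v))
    (h2 : Kill K N r t rest S (u ++ p :: p :: a :: v)) :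
    Kill K N r t rest S (u ++ p :: a :: p :: v) := by
  intro hr hS
  simp only [List.length_append, List.length_cons] at hr
  have z1 := h1 (by simp; omega) (by intro x hx; apply hS; simp at hx ⊢; tauto)
  have z2 := h2 (by simp; omega) (by intro x hx; apply hS; simp at hx ⊢; tauto)
  simp only [List.append_assoc, List.cons_append] at z1 z2 ⊢
  have s1 : Sw m u.length p a (u ++ p :: a :: p :: (v ++ t :: rest))
    (u ++ a :: p :: p :: (v ++ t :: rest)) := ⟨u, _, rfl, rfl, rfl, by omega⟩
  have s3 : Sw m (u.length + 1) a p (u ++ p :: a :: p :: (v ++ t :: rest))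
    (u ++ p :: p :: a :: (v ++ t :: rest)) :=
    ⟨u ++ [p], (v ++ t :: rest), by simp, by simp, by simp, by omega⟩
  rw [braidL K u (v ++ t :: rest) p a (by omega) ho, mul_sub, ← mul_assoc, ← mul_assoc,
    ← mul_assoc, ← mul_assoc,
    pass0 K N (D_X_far K s1.symm r (by omega) (by omega)) z1,
    pass0 K N (D_X_far K s3.symm r (by omega) (by omega)) z2]
  simp

theorem kill_adj (hm : r + 1 + rest.length = m) (u v : List ℤ) (p q : ℤ)
    (ho : (p - q).natAbs = 1) (h : Kill K N r t rest S (u ++ q :: p :: v))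
    (hr : (u ++ p :: q :: v).length = r) (hS : ∀ x ∈ u ++ p :: q :: v, x ∈ S) :
    XX K r ((u ++ p :: q :: v) ++ t :: rest) ^ N *
      (XX K u.length ((u ++ p :: q :: v) ++ t :: rest) +
        XX K (u.length + 1) ((u ++ p :: q :: v) ++ t :: rest)) = 0 := by
  simp only [List.length_append, List.length_cons] at hr
  have hz := h (by simp; omega) (by intro x hx; apply hS; simp at hx ⊢; tauto)
  simp only [List.append_assoc, List.cons_append] at hz ⊢
  have s : Sw m u.length p q (u ++ p :: q :: (v ++ t :: rest)) (u ++ q :: p :: (v ++ t :: rest)) :=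
    ⟨u, _, rfl, rfl, rfl, by omega⟩
  rw [← D_D_adj K s ho, ← mul_assoc,
    pass0 K N (D_X_far K s.symm r (by omega) (by omega)) hz, zero_mul]

theorem kill_stack (hm : r + 1 + rest.length = m) (u v : List ℤ) (p : ℤ) (c : ℤ)
    (h : (u ++ p :: p :: v).length = r → (∀ x ∈ u ++ p :: p :: v, x ∈ S) →
      XX K r ((u ++ p :: p :: v) ++ t :: rest) ^ N *
        XX K (u.length + 1) ((u ++ p :: p :: v) ++ t :: rest) =
      c • (XX K r ((u ++ p :: p :: v) ++ t :: rest) ^ N *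
        XX K r ((u ++ p :: p :: v) ++ t :: rest))) :
    Kill K N r t rest S (u ++ p :: p :: v) := by
  intro hr hS
  replace h := h hr hS
  simp only [List.length_append, List.length_cons] at hr
  simp only [List.append_assoc, List.cons_append] at h ⊢
  have s : Sw m u.length p p (u ++ p :: p :: (v ++ t :: rest)) (u ++ p :: p :: (v ++ t :: rest)) :=
    ⟨u, _, rfl, rfl, rfl, by omega⟩
  revert h s
  generalize u ++ p :: p :: (v ++ t :: rest) = L
  intro h s
  have cr : Commute (DD K u.length L) (XX K r L) := D_X_far K s r (by omega) (by omega)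
  have cP := cr.pow_right N
  have h1 : XX K r L ^ N * DD K u.length L = 0 := by
    have e1 : DD K u.length L * (XX K r L ^ N * XX K (u.length + 1) L) * DD K u.length L =
        - (XX K r L ^ N * DD K u.length L) := by
      rw [← mul_assoc, cP.eq, mul_assoc (XX K r L ^ N), D_X_s2 K s, mul_sub, sub_mul, mul_assoc,
        mul_assoc, mul_assoc, D_D_same K s, E_D K s]
      simp
    rw [h, mul_smul_comm, smul_mul_assoc, ← mul_assoc, cP.eq, mul_assoc (XX K r L ^ N), cr.eq,
      mul_assoc, mul_assoc, D_D_same K s] at e1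
    simpa using e1.symm
  have h2 : EE K L = DD K u.length L * XX K u.length L -
      XX K (u.length + 1) L * DD K u.length L := by
    rw [D_X_s1 K s]; abel
  rw [h2, mul_sub, ← mul_assoc, h1, ← mul_assoc, ((X_X K r (u.length + 1) L).pow_left N).eq,
    mul_assoc, h1]
  simp

theorem kill_end (hm : r + 1 + rest.length = m) (ht : t ∈ S) (ih : IHf K N r S)
    (w : List ℤ) (q : ℤ) (hq : q = t ∨ 2 ≤ (q - t).natAbs) :
    Kill K N r t rest S (w ++ [q]) := by
  intro hr hS
  simp only [List.length_append, List.length_cons, List.length_nil, zero_add] at hr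
  simp only [List.append_assoc, List.cons_append, List.nil_append]
  have hqS : q ∈ S := hS q (by simp)
  have hwS : ∀ x ∈ w, x ∈ S := fun x hx => hS x (by simp [hx])
  subst hr
  rcases hq with rfl | hq
  · have z := ih w q (q :: rest) (by omega) (by simp; omega) hwS ht
    have s : Sw m w.length q q (w ++ q :: q :: rest) (w ++ q :: q :: rest) :=
      ⟨w, _, rfl, rfl, rfl, by omega⟩
    exact hh_fin K N _ _ (hh_stack K N s z) z
  · have z := ih w t (q :: rest) (by omega) (by simp; omega) hwS ht
    have s : Sw m w.length q t (w ++ q :: t :: rest) (w ++ t :: q :: rest) :=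
      ⟨w, _, rfl, rfl, rfl, by omega⟩
    rw [← D_D_orth K s hq, ← mul_assoc, pass0 K N (D_X_1 K s.symm (by omega)) z, zero_mul]

theorem adj_end (N' : ℕ) (w rest : List ℤ) (t s : ℤ) (hm : w.length + 2 + rest.length = m)
    (ho : (s - t).natAbs = 1)
    (z : XX K w.length (w ++ t :: s :: rest) ^ N' * EE K (w ++ t :: s :: rest) = 0) :
    XX K (w.length + 1) (w ++ s :: t :: rest) ^ N' *
      (XX K w.length (w ++ s :: t :: rest) + XX K (w.length + 1) (w ++ s :: t :: rest)) = 0 := by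
  have s : Sw m w.length s t (w ++ s :: t :: rest) (w ++ t :: s :: rest) :=
    ⟨w, _, rfl, rfl, rfl, by omega⟩
  rw [← D_D_adj K s ho, ← mul_assoc, pass0 K N' (D_X_1 K s.symm (by omega)) z, zero_mul]

theorem kill_ts (hm : r + 1 + rest.length = m) (ht : t ∈ S) (ih : IHf K N r S)
    (w : List ℤ) (s : ℤ) (hs : (t - s).natAbs = 1) :
    Kill K N r t rest S (w ++ [t, s]) := by
  intro hr hS
  simp only [List.length_append, List.length_cons, List.length_nil, zero_add] at hr
  simp only [List.append_assoc, List.cons_append, List.nil_append]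
  have hsS : s ∈ S := hS s (by simp)
  have hwS : ∀ x ∈ w, x ∈ S := fun x hx => hS x (by simp [hx])
  subst hr
  have z1 := ih (w ++ [s]) t (t :: rest) (by simp) (by simp; omega)
    (by simpa [or_imp, forall_and, hsS] using hwS) ht
  have z2 := ih w t (t :: s :: rest) (by omega) (by simp; omega) hwS ht
  have z3 := ih w t (s :: t :: rest) (by omega) (by simp; omega) hwS ht
  exact hh_fin K N w.length (w.length + 2)
    (hh_tst K N w rest t s (by omega) hs (by simpa using z1) z2) z3

theorem kill_sq (hm : r + 1 + rest.length = m) (ht : t ∈ S) (ih : IHf K N r S)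
    (w : List ℤ) (a b : ℤ) (ha : (t - a).natAbs = 1) (hb : (t - b).natAbs = 1)
    (hab : 2 ≤ (a - b).natAbs) :
    Kill K N r t rest S (w ++ [t, a, b]) := by
  intro hr hS
  simp only [List.length_append, List.length_cons, List.length_nil, zero_add] at hr
  simp only [List.append_assoc, List.cons_append, List.nil_append]
  have haS : a ∈ S := hS a (by simp)
  have hbS : b ∈ S := hS b (by simp)
  have hwS : ∀ x ∈ w, x ∈ S := fun x hx => hS x (by simp [hx])
  subst hr
  have z1 := ih (w ++ [a]) t (t :: b :: rest) (by simp) (by simp; omega)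
    (by simpa [or_imp, forall_and, haS] using hwS) ht
  have z2 := ih w t (t :: a :: b :: rest) (by omega) (by simp; omega) hwS ht
  have z3 := ih (w ++ [b, a]) t (t :: rest) (by simp) (by simp; omega)
    (by simpa [or_imp, forall_and, haS, hbS] using hwS) ht
  have z4 := ih (w ++ [b]) t (t :: a :: rest) (by simp) (by simp; omega)
    (by simpa [or_imp, forall_and, hbS] using hwS) ht
  have z5 := ih w t (a :: b :: t :: rest) (by omega) (by simp; omega) hwS ht
  have h := hh_sq K N w rest t a b (by omega) ha hb hab (by simpa using z1) z2
    (by simpa using z3) (by simpa using z4)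
  rw [hh_mul N (X_X K _ _ _)] at h
  rw [sub_eq_zero] at h
  rw [← h]
  exact z5

theorem kill_move (hm : r + 1 + rest.length = m) (q : ℤ) (v : List ℤ) : ∀ (cs u : List ℤ),
    (∀ c ∈ cs, 2 ≤ (q - c).natAbs) → Kill K N r t rest S (u ++ (cs ++ q :: v)) →
    Kill K N r t rest S (u ++ q :: (cs ++ v)) := by
  intro cs
  induction cs with
  | nil => intro u _ h; simpa using h
  | cons c cs ih =>
    intro u hc h
    apply kill_orth K hm u (cs ++ v) q c (hc c (by simp))
    have := ih (u ++ [c]) (fun x hx => hc x (by simp [hx])) (by simpa using h)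
    simpa using this

theorem kill_block (hm : r + 1 + rest.length = m) (cs v : List ℤ) : ∀ (bs u : List ℤ),
    (∀ b ∈ bs, ∀ c ∈ cs, 2 ≤ (b - c).natAbs) → Kill K N r t rest S (u ++ (cs ++ (bs ++ v))) →
    Kill K N r t rest S (u ++ (bs ++ (cs ++ v))) := by
  intro bs
  induction bs with
  | nil => intro u _ h; simpa using h
  | cons b bs ih =>
    intro u hc h
    have h1 := kill_move K hm b (bs ++ v) cs u (hc b (by simp)) (by simpa using h)
    have := ih (u ++ [b]) (fun x hx => hc x (by simp [hx])) (by simpa using h1)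
    simpa using this

theorem kill_far (hm : r + 1 + rest.length = m) (ht : t ∈ S) (ih : IHf K N r S)
    (u v : List ℤ) (q : ℤ) (hq : q = t ∨ 2 ≤ (q - t).natAbs)
    (hv : ∀ c ∈ v, 2 ≤ (q - c).natAbs) : Kill K N r t rest S (u ++ q :: v) := by
  have := kill_move K hm q [] v u hv
    (by simpa using kill_end K hm ht ih (u ++ v) q hq)
  simpa using this

/-- The word `t - εn, …, t - 2ε, t - ε`. -/
def chain (t ε : ℤ) : ℕ → List ℤ
  | 0 => []
  | n + 1 => (t - ε * (n + 1)) :: chain t ε n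

theorem chain_length (t ε : ℤ) (n : ℕ) : (chain t ε n).length = n := by
  induction n with
  | zero => rfl
  | succ n ih => simp [chain, ih]

theorem chain_split (t ε : ℤ) (j n : ℕ) (h : j ≤ n) : ∃ pre, chain t ε n = pre ++ chain t ε j ∧
    ∀ x ∈ pre, ∃ i : ℕ, j < i ∧ i ≤ n ∧ x = t - ε * i := by
  induction n, h using Nat.le_induction with
  | base => exact ⟨[], rfl, by simp⟩
  | succ n hn ih =>
    obtain ⟨pre, h1, h2⟩ := ih
    refine ⟨(t - ε * (n + 1)) :: pre, by simp [chain, h1], ?_⟩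
    intro x hx
    rcases List.mem_cons.1 hx with rfl | hx
    · exact ⟨n + 1, by omega, le_rfl, by push_cast; ring⟩
    · obtain ⟨i, a, b, c⟩ := h2 x hx
      exact ⟨i, a, by omega, c⟩

theorem mem_chain {t ε : ℤ} {n : ℕ} {x : ℤ} (h : x ∈ chain t ε n) :
    ∃ i : ℕ, 1 ≤ i ∧ i ≤ n ∧ x = t - ε * i := by
  obtain ⟨pre, h1, h2⟩ := chain_split t ε 0 n (Nat.zero_le _)
  rw [h1] at h
  simp only [chain, List.append_nil] at h
  exact h2 x h

theorem chain_snoc (t ε : ℤ) (n : ℕ) : ∃ f, chain t ε (n + 1) = f ++ [t - ε] ∧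
    ∀ x ∈ f, ∃ i : ℕ, 2 ≤ i ∧ i ≤ n + 1 ∧ x = t - ε * i := by
  obtain ⟨pre, h1, h2⟩ := chain_split t ε 1 (n + 1) (by omega)
  exact ⟨pre, by rw [h1]; simp [chain], h2⟩

/-- Dots along a chain agree up to sign with the last dot, after multiplication by its power. -/
theorem chain_dots (hm : r + 1 + rest.length = m) (ht : t ∈ S) (ih : IHf K N r S)
    (ε : ℤ) (hε : ε = 1 ∨ ε = -1) (n : ℕ) : ∃ c : ℤ, ∀ u : List ℤ,
    (u ++ chain t ε (n + 1)).length = r → (∀ x ∈ u ++ chain t ε (n + 1), x ∈ S) →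
      XX K r ((u ++ chain t ε (n + 1)) ++ t :: rest) ^ N *
        XX K u.length ((u ++ chain t ε (n + 1)) ++ t :: rest) =
      c • (XX K r ((u ++ chain t ε (n + 1)) ++ t :: rest) ^ N *
        XX K r ((u ++ chain t ε (n + 1)) ++ t :: rest)) := by
  induction n with
  | zero =>
    refine ⟨-1, fun u hr hS => ?_⟩
    simp only [chain, List.length_append, List.length_cons, List.length_nil, zero_add] at hr hS ⊢
    subst hr
    have z := ih u t ((t - ε * ((0 : ℕ) + 1)) :: rest) (by omega) (by simp; omega)
      (fun x hx => hS x (by simp [hx])) ht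
    have h := adj_end K N u rest t (t - ε * ((0 : ℕ) + 1)) (by omega)
      (by rcases hε with rfl | rfl <;> omega) z
    rw [mul_add, add_eq_zero_iff_eq_neg] at h
    simpa using h
  | succ n ihn =>
    obtain ⟨c, hc⟩ := ihn
    refine ⟨-c, fun u hr hS => ?_⟩
    have hk : Kill K N r t rest S (u ++ (t - ε * ((n : ℕ) + 1)) ::
        (t - ε * ((n + 1 : ℕ) + 1)) :: chain t ε n) := by
      have := kill_far K hm ht ih (u ++ [t - ε * ((n : ℕ) + 1)]) (chain t ε n)
        (t - ε * ((n + 1 : ℕ) + 1)) (by right; rcases hε with rfl | rfl <;> push_cast <;> omega)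
        (by
          intro x hx
          obtain ⟨i, h1, h2, rfl⟩ := mem_chain hx
          rcases hε with rfl | rfl <;> push_cast <;> omega)
      simpa using this
    have h1 := kill_adj K hm u (chain t ε n) (t - ε * ((n + 1 : ℕ) + 1)) (t - ε * ((n : ℕ) + 1))
      (by rcases hε with rfl | rfl <;> push_cast <;> omega) hk hr hS
    have h2 := hc (u ++ [t - ε * ((n + 1 : ℕ) + 1)]) (by simpa [chain] using hr)
      (by simpa [chain] using hS)
    simp only [chain, List.length_append, List.length_cons, List.length_nil, List.append_assoc,
      List.cons_append, List.nil_append, zero_add] at h1 h2 ⊢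
    rw [mul_add, h2, add_eq_zero_iff_eq_neg] at h1
    rw [h1, neg_smul]

theorem side_kill_eq (hm : r + 1 + rest.length = m) (ht : t ∈ S) (ih : IHf K N r S)
    (ε : ℤ) (hε : ε = 1 ∨ ε = -1) (n : ℕ) (u : List ℤ) :
    Kill K N r t rest S (u ++ (t - ε * (n + 1)) :: chain t ε (n + 1)) := by
  obtain ⟨c, hc⟩ := chain_dots K hm ht ih ε hε n
  apply kill_stack K hm u (chain t ε n) (t - ε * (n + 1)) c
  intro hr hS
  have := hc (u ++ [t - ε * (n + 1)]) (by simpa [chain] using hr) (by simpa [chain] using hS)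
  simpa [chain] using this

theorem side_kill (hm : r + 1 + rest.length = m) (ht : t ∈ S) (ih : IHf K N r S)
    (ε : ℤ) (hε : ε = 1 ∨ ε = -1) (n j : ℕ) (hj : 1 ≤ j) (hjn : j ≠ n + 1) (u : List ℤ) :
    Kill K N r t rest S (u ++ (t - ε * j) :: chain t ε n) := by
  rcases lt_trichotomy j n with h | h | h
  · obtain ⟨pre, h1, h2⟩ := chain_split t ε (j + 1) n h
    obtain ⟨i, rfl⟩ : ∃ i, j = i + 1 := ⟨j - 1, by omega⟩
    rw [h1]
    apply kill_move K hm
    · intro c hc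
      obtain ⟨l, a, b, rfl⟩ := h2 c hc
      rcases hε with rfl | rfl <;> push_cast <;> omega
    · have e : u ++ (pre ++ (t - ε * (i + 1 : ℕ)) :: chain t ε (i + 1 + 1)) =
        (u ++ pre) ++ (t - ε * (i + 1 : ℕ)) :: (t - ε * ((i + 1 : ℕ) + 1)) ::
          (t - ε * (i + 1 : ℕ)) :: chain t ε i := by simp [chain]
      rw [e]
      apply kill_braid K hm
      · rcases hε with rfl | rfl <;> push_cast <;> omega
      · have := side_kill_eq K hm ht ih ε hε i ((u ++ pre) ++ [t - ε * ((i + 1 : ℕ) + 1)])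
        simpa [chain] using this
      · have := kill_far K hm ht ih ((u ++ pre) ++ [t - ε * (i + 1 : ℕ), t - ε * (i + 1 : ℕ)])
          (chain t ε i) (t - ε * ((i + 1 : ℕ) + 1))
          (by right; rcases hε with rfl | rfl <;> push_cast <;> omega)
          (by
            intro x hx
            obtain ⟨l, h1, h2, rfl⟩ := mem_chain hx
            rcases hε with rfl | rfl <;> push_cast <;> omega)
        simpa using this
  · subst h
    obtain ⟨i, rfl⟩ : ∃ i, j = i + 1 := ⟨j - 1, by omega⟩
    have := side_kill_eq K hm ht ih ε hε i u
    simpa using this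
  · apply kill_far K hm ht ih
    · right
      rcases hε with rfl | rfl <;> omega
    · intro x hx
      obtain ⟨i, h1, h2, rfl⟩ := mem_chain hx
      rcases hε with rfl | rfl <;> omega

theorem top_kill (hm : r + 1 + rest.length = m) (ht : t ∈ S) (ih : IHf K N r S)
    (a b : ℕ) (u : List ℤ) :
    Kill K N r t rest S (u ++ t :: (chain t 1 a ++ chain t (-1) b)) := by
  rcases a with _ | a
  · rcases b with _ | b
    · exact kill_end K hm ht ih u t (Or.inl rfl)
    · obtain ⟨f, h1, h2⟩ := chain_snoc t (-1) b
      rw [h1]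
      simp only [chain, List.nil_append]
      apply kill_move K hm
      · intro c hc
        obtain ⟨i, a1, a2, rfl⟩ := h2 c hc
        omega
      · have := kill_ts K hm ht ih (u ++ f) (t - -1) (by omega)
        simpa using this
  · obtain ⟨g, g1, g2⟩ := chain_snoc t 1 a
    rw [g1]
    rcases b with _ | b
    · simp only [chain, List.append_nil]
      apply kill_move K hm
      · intro c hc
        obtain ⟨i, a1, a2, rfl⟩ := g2 c hc
        omega
      · have := kill_ts K hm ht ih (u ++ g) (t - 1) (by omega)
        simpa using this
    · obtain ⟨f, h1, h2⟩ := chain_snoc t (-1) b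
      rw [h1, List.append_assoc]
      apply kill_move K hm
      · intro c hc
        obtain ⟨i, a1, a2, rfl⟩ := g2 c hc
        omega
      · have h3 := kill_block K hm (N := N) (r := r) (t := t) (rest := rest) (S := S)
          f [t - -1] [t, t - 1] (u ++ g)
          (by
            intro x hx c hc
            obtain ⟨i, a1, a2, rfl⟩ := h2 c hc
            simp at hx
            omega)
          (by
            have := kill_sq K hm ht ih (u ++ g ++ f) (t - 1) (t - -1) (by omega) (by omega)
              (by omega)
            simpa using this)
        simpa using h3

/-- Reduction to the case where the word consists of the two chains. -/
theorem full_kill (hm : r + 1 + rest.length = m) (ht : t ∈ S) (ih : IHf K N r S)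
    (hbase : ∀ a b : ℕ, Kill K N r t rest S (chain t 1 a ++ chain t (-1) b)) (u : List ℤ) :
    ∀ a b : ℕ, Kill K N r t rest S (u ++ (chain t 1 a ++ chain t (-1) b)) := by
  induction u using List.reverseRecOn with
  | nil => exact hbase
  | append_singleton u y ihu =>
    intro a b
    rw [List.append_assoc, List.singleton_append]
    have hP : ∀ x ∈ chain t 1 a, x < t := by
      intro x hx
      obtain ⟨i, h1, h2, rfl⟩ := mem_chain hx
      omega
    have hM : ∀ x ∈ chain t (-1) b, t < x := by
      intro x hx
      obtain ⟨i, h1, h2, rfl⟩ := mem_chain hx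
      omega
    rcases lt_trichotomy y t with h | h | h
    · obtain ⟨j, hj⟩ : ∃ j : ℕ, y = t - 1 * j := ⟨(t - y).natAbs, by omega⟩
      by_cases hja : j = a + 1
      · have := ihu (a + 1) b
        rw [hj, hja]
        simpa [chain] using this
      · have := kill_block K hm (N := N) (r := r) (t := t) (rest := rest) (S := S)
          (chain t (-1) b) [] (y :: chain t 1 a) u
          (by
            intro x hx c hc
            have := hM c hc
            rcases List.mem_cons.1 hx with rfl | hx
            · omega
            · have := hP x hx
              omega)
          (by
            have := side_kill K hm ht ih 1 (Or.inl rfl) a j (by omega) hja (u ++ chain t (-1) b)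
            rw [hj]
            simpa using this)
        simpa using this
    · subst h
      exact top_kill K hm ht ih a b u
    · obtain ⟨j, hj⟩ : ∃ j : ℕ, y = t - (-1) * j := ⟨(t - y).natAbs, by omega⟩
      apply kill_move K hm
      · intro c hc
        have := hP c hc
        omega
      · by_cases hja : j = b + 1
        · have := ihu a (b + 1)
          rw [hj, hja]
          simpa [chain] using this
        · have := side_kill K hm ht ih (-1) (Or.inr rfl) b j (by omega) hja (u ++ chain t 1 a)
          rw [hj]
          simpa using this

end KillSec

open Classical in
/-- Letters trapped below `C`, scanning the (reversed) word `v`. -/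
noncomputable def tr : List ℤ → Finset ℤ → Finset ℤ
  | [], C => C
  | y :: v, C => if ∃ c ∈ C, (y - c).natAbs ≤ 1 then tr v (insert y C) else tr v C

theorem tr_append (v w : List ℤ) : ∀ C, tr (v ++ w) C = tr w (tr v C) := by
  induction v with
  | nil => intro C; rfl
  | cons y v ih =>
    intro C
    simp only [List.cons_append, tr]
    split_ifs <;> exact ih _

theorem tr_sub (P : ℤ → Prop) (v : List ℤ)
    (hP : ∀ y ∈ v, ∀ c, P c → (y - c).natAbs ≤ 1 → P y) : ∀ C, (∀ c ∈ C, P c) →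
    ∀ x ∈ tr v C, P x := by
  induction v with
  | nil => intro C hC; exact hC
  | cons y v ih =>
    intro C hC
    simp only [tr]
    split_ifs with h
    · apply ih (fun z hz => hP z (by simp [hz]))
      obtain ⟨c, hc, hy⟩ := h
      intro x hx
      rcases Finset.mem_insert.1 hx with rfl | hx
      · exact hP x (by simp) c (hC c hc) hy
      · exact hC x hx
    · exact ih (fun z hz => hP z (by simp [hz])) C hC

theorem tr_mono (v : List ℤ) : ∀ C C', C ⊆ C' → tr v C ⊆ tr v C' := by
  induction v with
  | nil => intro C C' h; exact h
  | cons y v ih =>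
    intro C C' h
    simp only [tr]
    split_ifs with h1 h2 h2
    · exact ih _ _ (Finset.insert_subset_insert _ h)
    · obtain ⟨c, hc, hy⟩ := h1
      exact absurd ⟨c, h hc, hy⟩ h2
    · exact ih _ _ (h.trans (Finset.subset_insert _ _))
    · exact ih _ _ h

theorem sub_tr (v : List ℤ) : ∀ C, C ⊆ tr v C := by
  induction v with
  | nil => intro C; exact subset_rfl
  | cons y v ih =>
    intro C
    simp only [tr]
    split_ifs with h1
    · exact (Finset.subset_insert _ _).trans (ih _)
    · exact ih _

section MainSec

variable {m : ℕ} {A : Type} [Ring A] {Λ : ℤ →₀ ℕ} (K : CycKLR ℤ adjZ m A Λ)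

/-- The main statement for the dot in position `r`. -/
def MainAt (r : ℕ) : Prop :=
  ∀ (w : List ℤ) (t : ℤ) (rest : List ℤ) (S : Finset ℤ), w.length = r →
    r + 1 + rest.length = m → tr w.reverse {t} ⊆ S →
    XX K r (w ++ t :: rest) ^ (∑ j ∈ S, Λ j) * EE K (w ++ t :: rest) = 0

theorem mainAt_ihf {r : ℕ} (ih : ∀ r' < r, MainAt K r') (S : Finset ℤ) :
    IHf K (∑ j ∈ S, Λ j) r S := by
  intro w t rest hw hm hS ht
  refine ih w.length hw w t rest S rfl hm ?_
  intro x hx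
  exact tr_sub (fun x => x ∈ S) w.reverse (fun y hy _ _ _ => hS y (by simpa using hy)) {t}
    (by simpa using ht) x hx

/-- Splitting argument when `t` and `s` do not occur before. -/
theorem split_kill {r : ℕ} (ih : ∀ r' < r, MainAt K r') (t : ℤ) (rest : List ℤ) (S : Finset ℤ)
    (hm : r + 1 + rest.length = m) (ht : t ∈ S) (w : List ℤ) (ε : ℤ) (hε : ε = 1 ∨ ε = -1)
    (hw : ∀ x ∈ w, x ≠ t ∧ x ≠ t - ε) :
    Kill K (∑ j ∈ S, Λ j) r t rest S (w ++ [t - ε]) := by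
  intro hr hS
  simp only [List.length_append, List.length_cons, List.length_nil, zero_add] at hr
  simp only [List.append_assoc, List.cons_append, List.nil_append]
  subst hr
  set S1 := S.filter (fun y => 1 ≤ ε * (t - y)) with hS1
  set S2 := S.filter (fun y => ¬ 1 ≤ ε * (t - y)) with hS2
  have hsum : ∑ j ∈ S, Λ j = (∑ j ∈ S2, Λ j) + ∑ j ∈ S1, Λ j := by
    rw [add_comm, Finset.sum_filter_add_sum_filter_not]
  have hwS : ∀ x ∈ w, x ∈ S := fun x hx => hS x (by simp [hx])
  have hsS : t - ε ∈ S := hS _ (by simp)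
  have z1 := ih w.length (by omega) w (t - ε) (t :: rest) S1 rfl (by simp; omega) (by
    refine tr_sub (fun x => x ∈ S1) w.reverse ?_ _ ?_
    · intro y hy c hc hyc
      have hy' : y ∈ w := by simpa using hy
      have h1 := hw y hy'
      simp only [hS1, Finset.mem_filter] at hc ⊢
      refine ⟨hwS y hy', ?_⟩
      rcases hε with rfl | rfl <;> omega
    · intro c hc
      rw [Finset.mem_singleton] at hc
      subst hc
      simp only [hS1, Finset.mem_filter]
      refine ⟨hsS, ?_⟩
      rcases hε with rfl | rfl <;> omega)
  have z2 := ih w.length (by omega) w t ((t - ε) :: rest) S2 rfl (by simp; omega) (by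
    refine tr_sub (fun x => x ∈ S2) w.reverse ?_ _ ?_
    · intro y hy c hc hyc
      have hy' : y ∈ w := by simpa using hy
      have h1 := hw y hy'
      simp only [hS2, Finset.mem_filter] at hc ⊢
      refine ⟨hwS y hy', ?_⟩
      rcases hε with rfl | rfl <;> omega
    · intro c hc
      rw [Finset.mem_singleton] at hc
      subst hc
      simp only [hS2, Finset.mem_filter]
      refine ⟨ht, ?_⟩
      rcases hε with rfl | rfl <;> omega)
  have h := adj_end K _ w rest t (t - ε) (by omega) (by rcases hε with rfl | rfl <;> omega) z2
  rw [hsum]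
  revert h z1
  generalize w ++ (t - ε) :: t :: rest = L
  generalize ∑ j ∈ S1, Λ j = n
  generalize ∑ j ∈ S2, Λ j = n'
  intro z1 h
  have key : ∀ k, XX K (w.length + 1) L ^ (n' + k) =
      XX K (w.length + 1) L ^ n' * (- XX K w.length L) ^ k := by
    intro k
    induction k with
    | zero => simp
    | succ k ihk =>
      rw [mul_add, add_comm, add_eq_zero_iff_eq_neg] at h
      have hc : Commute (XX K (w.length + 1) L) (- XX K w.length L) :=
        (X_X K _ _ L).neg_right
      rw [← add_assoc, pow_succ, ihk, mul_assoc, ← (hc.pow_right k).eq, ← mul_assoc, h,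
        ← mul_neg, mul_assoc, ← pow_succ']
  rw [key, neg_pow, mul_assoc, mul_assoc, z1]
  simp

theorem chains_kill {r : ℕ} (ih : ∀ r' < r, MainAt K r') (t : ℤ) (rest : List ℤ) (S : Finset ℤ)
    (hm : r + 1 + rest.length = m) (ht : t ∈ S) (a b : ℕ) :
    Kill K (∑ j ∈ S, Λ j) r t rest S (chain t 1 a ++ chain t (-1) b) := by
  rcases b with _ | b
  · rcases a with _ | a
    · intro hr _
      simp only [chain, List.append_nil, List.length_nil] at hr
      subst hr
      simp only [chain, List.nil_append]
      have h0 : 0 < m := by omega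
      have hc := K.cyc h0 (wd m (t :: rest))
      have e : wd m (t :: rest) ⟨0, h0⟩ = t := by simp [wd]
      rw [e] at hc
      have hX : XX K 0 (t :: rest) = K.x ⟨0, h0⟩ (wd m (t :: rest)) := by
        unfold XX
        rw [dif_pos h0]
      have hle : Λ t ≤ ∑ j ∈ S, Λ j := Finset.single_le_sum (f := fun j => Λ j)
        (fun _ _ => Nat.zero_le _) ht
      obtain ⟨d, hd⟩ := Nat.exists_eq_add_of_le' hle
      rw [hd, pow_add, hX, mul_assoc]
      unfold EE
      rw [hc, mul_zero]
    · obtain ⟨g, g1, g2⟩ := chain_snoc t 1 a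
      rw [g1]
      simp only [chain, List.append_nil]
      apply split_kill K ih t rest S hm ht g 1 (Or.inl rfl)
      intro x hx
      obtain ⟨i, a1, a2, rfl⟩ := g2 x hx
      omega
  · obtain ⟨g, g1, g2⟩ := chain_snoc t (-1) b
    rw [g1, ← List.append_assoc]
    apply split_kill K ih t rest S hm ht _ (-1) (Or.inr rfl)
    intro x hx
    rcases List.mem_append.1 hx with hx | hx
    · obtain ⟨i, a1, a2, rfl⟩ := mem_chain hx
      omega
    · obtain ⟨i, a1, a2, rfl⟩ := g2 x hx
      omega

/-- Removal of non-trapped beads. -/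
theorem red_kill {r : ℕ} (ih : ∀ r' < r, MainAt K r') (t : ℤ) (rest : List ℤ) (S : Finset ℤ)
    (hm : r + 1 + rest.length = m) (u : List ℤ) : ∀ c : List ℤ, (u ++ c).length = r →
    tr u.reverse (insert t c.toFinset) ⊆ S →
    XX K r ((u ++ c) ++ t :: rest) ^ (∑ j ∈ S, Λ j) * EE K ((u ++ c) ++ t :: rest) = 0 := by
  induction u using List.reverseRecOn with
  | nil =>
    intro c hr hS
    simp only [List.reverse_nil, tr] at hS
    have ht : t ∈ S := hS (by simp)
    have := full_kill K hm ht (mainAt_ihf K ih S) (chains_kill K ih t rest S hm ht) c 0 0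
    simp only [chain, List.append_nil] at this
    exact this hr (fun x hx => hS (Finset.mem_insert_of_mem (List.mem_toFinset.2 hx)))
  | append_singleton u y ihu =>
    intro c hr hS
    simp only [List.reverse_append, List.reverse_cons, List.reverse_nil, List.nil_append,
      List.singleton_append, tr] at hS
    split_ifs at hS with h
    · have := ihu (y :: c) (by simpa using hr)
        (by rw [List.toFinset_cons, Finset.insert_comm]; exact hS)
      simpa using this
    · push Not at h
      have hyt := h t (by simp)
      have hyc : ∀ x ∈ c, 1 < (y - x).natAbs := fun x hx => h x (by simp [hx])
      -- transport, ignoring membership in `S`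
      have hk : Kill K (∑ j ∈ S, Λ j) r t rest (insert y (insert t (u ++ c).toFinset))
          (u ++ y :: (c ++ [])) := by
        apply kill_move K hm y [] c u hyc
        intro hr' _
        have e : (u ++ (c ++ [y])) ++ t :: rest = (u ++ c) ++ y :: t :: rest := by simp
        have hl : r = (u ++ c).length + 1 := by rw [← hr']; simp; omega
        rw [e]
        have z := ih (u ++ c).length (by omega) (u ++ c) t (y :: rest) S rfl
          (by simp only [List.length_cons]; omega) (by
            rw [List.reverse_append, tr_append]
            refine (tr_mono _ _ _ ?_).trans hS
            exact tr_sub (fun x => x ∈ insert t c.toFinset) _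
              (fun z hz _ _ _ => Finset.mem_insert_of_mem (List.mem_toFinset.2 (List.mem_reverse.1 hz))) _ (by simp))
        have s : Sw m (u ++ c).length y t ((u ++ c) ++ y :: t :: rest)
          ((u ++ c) ++ t :: y :: rest) := ⟨u ++ c, _, rfl, rfl, rfl, by omega⟩
        rw [hl, ← D_D_orth K s (by omega), ← mul_assoc,
          pass0 K _ (D_X_1 K s.symm (by omega)) z, zero_mul]
      have := hk (by simpa using hr) (by intro x hx; simp at hx ⊢; tauto)
      simpa using this

theorem mainAt (r : ℕ) : MainAt K r := by
  induction r using Nat.strong_induction_on with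
  | _ r ih =>
    intro w t rest S hr hm hS
    have := red_kill K ih t rest S hm w [] (by simpa using hr) (by simpa using hS)
    simpa using this

end MainSec

theorem tr_trapped (l : List ℤ) (r : ℕ) (hr : r < l.length) : ∀ (k : ℕ) (C : Finset ℤ), k ≤ r →
    (∀ c ∈ C, ∃ j, k ≤ j ∧ j < l.length ∧ Trapped l r j ∧ l.getD j 0 = c) →
    tr (l.take k).reverse C ⊆ trappedRunners l r := by
  intro k
  induction k with
  | zero =>
    intro C _ hC x hx
    simp only [List.take_zero, List.reverse_nil, tr] at hx
    obtain ⟨j, _, h2, h3, h4⟩ := hC x hx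
    unfold trappedRunners
    simp only [Finset.mem_image, Finset.mem_filter, Finset.mem_range]
    exact ⟨j, ⟨h2, h3⟩, h4⟩
  | succ k ih =>
    intro C hk hC
    have hkl : k < l.length := by omega
    have e : l.take (k + 1) = l.take k ++ [l.getD k 0] := by
      rw [List.take_add_one]
      simp [hkl]
    rw [e]
    simp only [List.reverse_append, List.reverse_cons, List.reverse_nil, List.nil_append,
      List.singleton_append, tr]
    split_ifs with h
    · apply ih _ (by omega)
      intro c hc
      rcases Finset.mem_insert.1 hc with rfl | hc
      · obtain ⟨c, hc, hy⟩ := h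
        obtain ⟨j, h1, h2, h3, h4⟩ := hC c hc
        refine ⟨k, le_rfl, hkl, ?_, rfl⟩
        refine Relation.ReflTransGen.head ⟨by omega, h2, ?_⟩ h3
        rw [h4]
        exact hy
      · obtain ⟨j, h1, h2, h3, h4⟩ := hC c hc
        exact ⟨j, by omega, h2, h3, h4⟩
    · apply ih _ (by omega)
      intro c hc
      obtain ⟨j, h1, h2, h3, h4⟩ := hC c hc
      exact ⟨j, by omega, h2, h3, h4⟩

/-- Main theorem.  For `Γ` of type `A_∞`, `Λ = Σ λ_i·i` and
any sequence `i = i₁…i_m`, the nilpotency degree of `x_{r,i}` in the cyclotomic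
quotient `R_ν^Λ` is at most the `r`-antigravity bound
`b_r = Σ_{j ∈ Supp(a_r(i))} λ_j`, i.e. `x_{r,i}^{b_r} = 0`. -/
theorem antigravity_bound_nilpotency {m : ℕ} {A : Type} [Ring A] {Λ : ℤ →₀ ℕ}
    (K : CycKLR ℤ adjZ m A Λ) (q : Fin m → ℤ) (r : Fin m) :
    K.x r q ^ agBound Λ (List.ofFn q) r.val * K.e q = 0 := by
  have hw : wd m (List.ofFn q) = q := by
    funext k
    simp [wd]
  have hlen : (List.ofFn q).length = m := by simp
  have hrl : r.val < (List.ofFn q).length := by rw [hlen]; exact r.isLt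
  have hsplit : (List.ofFn q).take r.val ++
      (List.ofFn q).getD r.val 0 :: (List.ofFn q).drop (r.val + 1) = List.ofFn q := by
    rw [List.getD_eq_getElem _ _ hrl, ← List.drop_eq_getElem_cons hrl, List.take_append_drop]
  have h := mainAt K r.val ((List.ofFn q).take r.val) ((List.ofFn q).getD r.val 0)
    ((List.ofFn q).drop (r.val + 1)) (trappedRunners (List.ofFn q) r.val)
    (by rw [List.length_take]; omega) (by rw [List.length_drop]; omega)
    (tr_trapped _ _ hrl _ _ le_rfl (by
      intro c hc
      rw [Finset.mem_singleton] at hc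
      exact ⟨r.val, le_rfl, hrl, Relation.ReflTransGen.refl, hc.symm⟩))
  rw [hsplit] at h
  unfold XX EE at h
  rw [dif_pos r.isLt, hw] at h
  exact h

end KLRPaper
end

section
/- Let Λ ∈ ℕ[I] have level ℓ = Σ_i λ_i. Then x_{r,i}^ℓ = 0 in R_ν^Λ for every sequence i ∈ Seq(ν) and every 1 ≤ r ≤ m, for the quiver of type A_∞. -/
namespace KLRPaper


open MvPolynomial in
/-- Complete homogeneous polynomial of degree `k - 1` in two variables. -/
noncomputable def Hpoly {ν : Type} (k : ℕ) (a b : ν) : MvPolynomial ν ℤ :=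
  ∑ i ∈ Finset.range k, X a ^ i * X b ^ (k - 1 - i)

/-- Two beads on runners at distance at least two. -/
def Far {ν : Type} (col : ν → ℤ) (a b : ν) : Prop :=
  col a + 1 < col b ∨ col b + 1 < col a

open MvPolynomial in
/-- The rules satisfied by the polynomials annihilating an idempotent. -/
structure Sys {ν : Type} (col : ν → ℤ) (Λ : ℤ → ℕ)
    (Z : List ν → MvPolynomial ν ℤ → Prop) : Prop where
  add : ∀ l f g, Z l f → Z l g → Z l (f + g)
  mul : ∀ l f g, Z l f → Z l (g * f)
  far : ∀ P a b Q f, Far col a b → Z (P ++ b :: a :: Q) f → Z (P ++ a :: b :: Q) f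
  adj : ∀ P a b Q f, (col a = col b + 1 ∨ col b = col a + 1) →
    Z (P ++ b :: a :: Q) f → Z (P ++ a :: b :: Q) ((X a - X b) * f)
  d1 : ∀ P a b Q c u k, col a = col b → c ∈ Q → u ∈ Q →
    Z (P ++ a :: b :: Q) ((X b - X c) * X u ^ k) → Z (P ++ a :: b :: Q) (X u ^ k)
  d2 : ∀ P a b Q k, col a = col b →
    Z (P ++ a :: b :: Q) (X a ^ k) → Z (P ++ a :: b :: Q) (Hpoly k a b)
  braid : ∀ P a w b Q f, col a = col b → (col a = col w + 1 ∨ col w = col a + 1) →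
    Z (P ++ a :: b :: w :: Q) f → Z (P ++ w :: a :: b :: Q) f →
    Z (P ++ a :: w :: b :: Q) f
  cyc : ∀ a Q, Z (a :: Q) (X a ^ Λ (col a))

namespace Sys

open MvPolynomial

variable {ν : Type} {col : ν → ℤ} {Λ : ℤ → ℕ} {Z : List ν → MvPolynomial ν ℤ → Prop}

theorem pow_le (h : Sys col Λ Z) {l : List ν} {u : ν} {k n : ℕ} (hk : k ≤ n)
    (hz : Z l (X u ^ k)) : Z l (X u ^ n) := by
  obtain ⟨d, rfl⟩ := Nat.exists_eq_add_of_le hk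
  have := h.mul l _ (X u ^ d) hz
  rwa [← pow_add, add_comm] at this

theorem moveR (h : Sys col Λ Z) (a : ν) (f : MvPolynomial ν ℤ) (Q : List ν) :
    ∀ (M P : List ν), (∀ x ∈ M, Far col a x) → Z (P ++ M ++ a :: Q) f →
      Z (P ++ a :: (M ++ Q)) f := by
  intro M
  induction M with
  | nil => intro P _ hz; simpa using hz
  | cons x M ih =>
    intro P hM hz
    rw [List.cons_append]
    apply h.far _ _ _ _ _ (hM x (by simp))
    have := ih (P ++ [x]) (fun y hy => hM y (by simp [hy]))
      (by simpa only [List.append_assoc, List.cons_append, List.nil_append] using hz)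
    simpa only [List.append_assoc, List.cons_append, List.nil_append] using this

theorem moveL (h : Sys col Λ Z) (a : ν) (f : MvPolynomial ν ℤ) (Q : List ν) :
    ∀ (M P : List ν), (∀ x ∈ M, Far col a x) → Z (P ++ a :: (M ++ Q)) f →
      Z (P ++ M ++ a :: Q) f := by
  intro M
  induction M with
  | nil => intro P _ hz; simpa using hz
  | cons x M ih =>
    intro P hM hz
    have h1 : Z (P ++ x :: a :: (M ++ Q)) f := by
      apply h.far
      · have := hM x (by simp)
        unfold Far at *; omega
      · exact hz
    have := ih (P ++ [x]) (fun y hy => hM y (by simp [hy]))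
      (by simpa only [List.append_assoc, List.cons_append, List.nil_append] using h1)
    simpa only [List.append_assoc, List.cons_append, List.nil_append] using this

theorem moveLists (h : Sys col Λ Z) (f : MvPolynomial ν ℤ) (R Q : List ν) :
    ∀ (L P : List ν), (∀ x ∈ L, ∀ y ∈ R, Far col x y) → Z (P ++ (R ++ (L ++ Q))) f →
      Z (P ++ (L ++ (R ++ Q))) f := by
  intro L
  induction L with
  | nil => intro P _ hz; simpa using hz
  | cons x L ih =>
    intro P hL hz
    have h1 := h.moveR x f (L ++ Q) R P (hL x (by simp))
      (by simpa only [List.append_assoc, List.cons_append, List.nil_append] using hz)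
    have := ih (P ++ [x]) (fun y hy => hL y (by simp [hy]))
      (by simpa only [List.append_assoc, List.cons_append, List.nil_append] using h1)
    simpa only [List.append_assoc, List.cons_append, List.nil_append] using this

theorem sort (h : Sys col Λ Z) (f : MvPolynomial ν ℤ) (c : ℤ) (Q : List ν) :
    ∀ (B P : List ν), (∀ x ∈ B, col x ≠ c) →
      Z (P ++ (B.filter (fun x => col x < c) ++ (B.filter (fun x => c < col x) ++ Q))) f →
      Z (P ++ (B ++ Q)) f := by
  intro B
  induction B with
  | nil => intro P _ hz; simpa using hz
  | cons x B ih =>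
    intro P hB hz
    have hx := hB x (by simp)
    have key : Z ((P ++ [x]) ++ (B.filter (fun x => col x < c) ++
        (B.filter (fun x => c < col x) ++ Q))) f := by
      rcases lt_or_gt_of_ne hx with hlt | hgt
      · simpa [List.filter_cons, hlt, not_lt.2 hlt.le] using hz
      · have : Z (P ++ (B.filter (fun x => col x < c) ++
            ([x] ++ (B.filter (fun x => c < col x) ++ Q)))) f := by
          simpa [List.filter_cons, hgt, not_lt.2 hgt.le] using hz
        have := h.moveLists f _ _ [x] P ?_ this
        · simpa using this
        · intro y hy z hz
          simp at hy hz
          subst hy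
          unfold Far; omega
    have := ih (P ++ [x]) (fun y hy => hB y (by simp [hy])) key
    simpa using this

/-- The induction hypothesis. -/
def IH (col : ν → ℤ) (Λ : ℤ → ℕ) (Z : List ν → MvPolynomial ν ℤ → Prop) (N : ℕ) : Prop :=
  ∀ (P : List ν) (u : ν) (Q : List ν) (S : Finset ℤ), P.length < N → (∀ a ∈ P, col a ∈ S) →
    col u ∈ S → Z (P ++ u :: Q) (X u ^ (∑ d ∈ S, Λ d))

theorem out (h : Sys col Λ Z) {N : ℕ} (ih : IH col Λ Z N) {u : ν} {S : Finset ℤ}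
    (hu : col u ∈ S) (P : List ν) (a : ν) (M Q : List ν)
    (hN : P.length + M.length < N) (hP : ∀ x ∈ P, col x ∈ S) (hM : ∀ x ∈ M, col x ∈ S)
    (hf : ∀ x ∈ M, Far col a x) (hfu : Far col a u) :
    Z (P ++ a :: (M ++ u :: Q)) (X u ^ (∑ d ∈ S, Λ d)) := by
  have h1 := ih (P ++ M) u (a :: Q) S (by simpa using hN)
    (by intro x hx; rcases List.mem_append.1 hx with hx | hx; exacts [hP x hx, hM x hx]) hu
  have := h.moveR a (X u ^ (∑ d ∈ S, Λ d)) Q (M ++ [u]) P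
    (by intro x hx; rcases List.mem_append.1 hx with hx | hx
        · exact hf x hx
        · simp at hx; rwa [hx])
    (by simpa only [List.append_assoc, List.cons_append, List.nil_append] using h1)
  simpa only [List.append_assoc, List.cons_append, List.nil_append] using this

theorem last_occ {p : ν → Prop} (M : List ν) (hM : ∃ x ∈ M, p x) :
    ∃ M1 x M2, M = M1 ++ x :: M2 ∧ p x ∧ ∀ y ∈ M2, ¬ p y := by
  induction M with
  | nil => simp at hM
  | cons y M ih =>
    by_cases h : ∃ x ∈ M, p x
    · obtain ⟨M1, x, M2, rfl, hx, h2⟩ := ih h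
      exact ⟨y :: M1, x, M2, rfl, hx, h2⟩
    · push Not at h
      obtain ⟨x, hx, hpx⟩ := hM
      rcases List.mem_cons.1 hx with rfl | hx
      · exact ⟨[], x, M, rfl, hpx, h⟩
      · exact absurd hpx (h x hx)

theorem chain (h : Sys col Λ Z) {N : ℕ} (ih : IH col Λ Z N) {u : ν} {S : Finset ℤ}
    (hu : col u ∈ S) {s : ℤ} (hs : s = 1 ∨ s = -1) (Q : List ν) :
    ∀ (n : ℕ) (M : List ν), M.length = n → ∀ (D : ℤ) (P0 : List ν) (a' a : ν)
      (C T' : List ν) (t : ν),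
      C ++ [u] = t :: T' → s * col t = D - 1 → (∀ x ∈ T', s * col x ≤ D - 2) →
      s * col a' = D → s * col a = D → (∀ x ∈ M, D + 1 ≤ s * col x) →
      (∀ x ∈ P0 ++ a' :: (M ++ a :: C), col x ∈ S) →
      (P0 ++ a' :: (M ++ a :: C)).length ≤ N →
      Z (P0 ++ a' :: (M ++ a :: (C ++ u :: Q))) (X u ^ (∑ d ∈ S, Λ d)) := by
  intro n
  induction n using Nat.strong_induction_on with
  | _ n rec =>
  intro M hMn D P0 a' a C T' t hT ht hT' ha' ha hM hS hN
  have hCu : ∀ x ∈ C ++ [u], s * col x ≤ D - 1 := by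
    rw [hT]; intro x hx
    rcases List.mem_cons.1 hx with rfl | hx
    · omega
    · have := hT' x hx; omega
  have hCl : ∀ x ∈ C, s * col x ≤ D - 1 := fun x hx => hCu x (by simp [hx])
  have hul : s * col u ≤ D - 1 := hCu u (by simp)
  have far_of : ∀ x y : ν, s * col y + 2 ≤ s * col x → Far col x y := by
    intro x y hxy
    unfold Far
    rcases hs with rfl | rfl <;> omega
  have hcol : ∀ x y : ν, s * col x = s * col y → col x = col y := by
    intro x y hxy
    rcases hs with rfl | rfl <;> omega
  have hadj : ∀ x y : ν, s * col x = s * col y + 1 → (col x = col y + 1 ∨ col y = col x + 1) := by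
    intro x y hxy
    rcases hs with rfl | rfl <;> omega
  rcases List.eq_nil_or_concat M with rfl | ⟨M', x, rfl⟩
  · -- double
    simp only [List.nil_append] at *
    have htmem : t ∈ C ++ u :: Q := by
      have : t ∈ C ++ [u] := by rw [hT]; simp
      simp at this ⊢; tauto
    refine h.d1 P0 a' a (C ++ u :: Q) t u _ (hcol _ _ (by omega)) htmem (by simp) ?_
    rcases C with _ | ⟨t', C'⟩
    · simp at hT
      obtain ⟨rfl, rfl⟩ := hT
      have := ih (P0 ++ [a']) u (a :: Q) S (by simp at hN ⊢; omega)
        (by intro x hx; apply hS; simp at hx ⊢; tauto) hu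
      have := h.adj (P0 ++ [a']) a u Q _ (hadj _ _ (by omega)) this
      simpa only [List.append_assoc, List.cons_append, List.nil_append] using this
    · simp at hT
      obtain ⟨rfl, rfl⟩ := hT
      have := h.out ih hu (P0 ++ [a', t']) a C' Q (by simp at hN ⊢; omega)
        (by intro x hx; apply hS; simp at hx ⊢; tauto)
        (by intro x hx; apply hS; simp at hx ⊢; tauto)
        (by intro x hx; apply far_of; have := hT' x (by simp [hx]); omega)
        (by apply far_of; have := hT' u (by simp); omega)
      have := h.adj (P0 ++ [a']) a t' (C' ++ u :: Q) _ (hadj _ _ (by omega))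
        (by simpa only [List.append_assoc, List.cons_append, List.nil_append] using this)
      simpa only [List.append_assoc, List.cons_append, List.nil_append] using this
  · rw [List.concat_eq_append] at *
    have hx := hM x (by simp)
    by_cases hx1 : s * col x = D + 1
    · by_cases hex : ∃ y ∈ M', s * col y = D + 1
      · obtain ⟨M1, x', M2, rfl, hx', hM2⟩ := last_occ (p := fun y => s * col y = D + 1) M' hex
        have := rec M2.length (by simp at hMn; omega) M2 rfl (D + 1) (P0 ++ a' :: M1) x' x
          (a :: C) (C ++ [u]) a rfl (by omega) (by intro y hy; have := hCu y hy; omega) hx' hx1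
          (by intro y hy; have h1 := hM2 y hy; have h2 := hM y (by simp [hy]); omega)
          (by intro y hy; apply hS; simp at hy ⊢; tauto)
          (by simp at hN ⊢; omega)
        simpa only [List.append_assoc, List.cons_append, List.nil_append] using this
      · push Not at hex
        have hM' : ∀ y ∈ M', D + 2 ≤ s * col y := by
          intro y hy; have h1 := hex y hy; have h2 := hM y (by simp [hy]); omega
        have key : Z ((P0 ++ M') ++ a' :: x :: a :: (C ++ u :: Q)) (X u ^ (∑ d ∈ S, Λ d)) := by
          apply h.braid _ _ _ _ _ _ (hcol _ _ (by omega)) (hadj _ _ (by omega)).symm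
          · have := h.out ih hu (P0 ++ M' ++ [a', a]) x C Q (by simp at hN ⊢; omega)
              (by intro y hy; apply hS; simp at hy ⊢; tauto)
              (by intro y hy; apply hS; simp at hy ⊢; tauto)
              (by intro y hy; apply far_of; have := hCl y hy; omega)
              (by apply far_of; omega)
            simpa only [List.append_assoc, List.cons_append, List.nil_append] using this
          · have := rec 0 (by simp at hMn; omega) [] rfl D (P0 ++ M' ++ [x]) a' a C T' t hT ht hT'
              ha' ha (by simp) (by intro y hy; apply hS; simp at hy ⊢; tauto)
              (by simp at hN ⊢; omega)
            simpa only [List.append_assoc, List.cons_append, List.nil_append] using this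
        have := h.moveR a' _ (x :: a :: (C ++ u :: Q)) M' P0 (by
          intro y hy
          have h1 := far_of y a' (by have := hM' y hy; omega)
          unfold Far at *; omega) key
        simpa only [List.append_assoc, List.cons_append, List.nil_append] using this
    · have := h.out ih hu (P0 ++ a' :: M') x (a :: C) Q (by simp at hN ⊢; omega)
        (by intro y hy; apply hS; simp at hy ⊢; tauto)
        (by intro y hy; apply hS; simp at hy ⊢; tauto)
        (by intro y hy; apply far_of
            rcases List.mem_cons.1 hy with rfl | hy
            · omega
            · have := hCl y hy; omega)
        (by apply far_of; omega)
      simpa only [List.append_assoc, List.cons_append, List.nil_append] using this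

/-- One side of the beads right below `u` either can be dealt with by induction, or is empty,
or carries a single bead next to the runner of `u`. -/
theorem reduce (h : Sys col Λ Z) {N : ℕ} (ih : IH col Λ Z N) {u : ν} {S : Finset ℤ}
    (hu : col u ∈ S) {s : ℤ} (hs : s = 1 ∨ s = -1) (Q P0 L : List ν)
    (hL : ∀ x ∈ L, s * col u + 1 ≤ s * col x)
    (hS : ∀ x ∈ P0 ++ L, col x ∈ S) (hN : (P0 ++ L).length ≤ N) :
    Z (P0 ++ (L ++ u :: Q)) (X u ^ (∑ d ∈ S, Λ d)) ∨ L = [] ∨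
      ∃ M x, L = M ++ [x] ∧ s * col x = s * col u + 1 ∧ ∀ y ∈ M, s * col u + 2 ≤ s * col y := by
  rcases List.eq_nil_or_concat L with rfl | ⟨M, x, rfl⟩
  · exact Or.inr (Or.inl rfl)
  rw [List.concat_eq_append] at *
  have hx := hL x (by simp)
  by_cases hx1 : s * col x = s * col u + 1
  · by_cases hex : ∃ y ∈ M, s * col y = s * col u + 1
    · left
      obtain ⟨M1, x', M2, rfl, hx', hM2⟩ := last_occ (p := fun y => s * col y = s * col u + 1) M hex
      have := h.chain ih hu hs Q M2.length M2 rfl (s * col u + 1) (P0 ++ M1) x' x [] [] u rfl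
        (by omega) (by simp) hx' hx1
        (by intro y hy; have h1 := hM2 y hy; have h2 := hL y (by simp [hy]); omega)
        (by intro y hy; apply hS; simp at hy ⊢; tauto)
        (by simp at hN ⊢; omega)
      simpa only [List.append_assoc, List.cons_append, List.nil_append] using this
    · push Not at hex
      refine Or.inr (Or.inr ⟨M, x, rfl, hx1, ?_⟩)
      intro y hy; have h1 := hex y hy; have h2 := hL y (by simp [hy]); omega
  · left
    have := h.out ih hu (P0 ++ M) x [] Q (by simp at hN ⊢; omega)
      (by intro y hy; apply hS; simp at hy ⊢; tauto) (by simp) (by simp)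
      (by unfold Far; rcases hs with rfl | rfl <;> omega)
    simpa only [List.append_assoc, List.cons_append, List.nil_append] using this

theorem Hpoly_mul (k : ℕ) (a b : ν) :
    (X a - X b : MvPolynomial ν ℤ) * Hpoly k a b = X a ^ k - X b ^ k := by
  unfold Hpoly
  rw [mul_comm]
  exact geom_sum₂_mul _ _ _

theorem d2' (h : Sys col Λ Z) (P : List ν) (a b : ν) (Q : List ν) (k : ℕ) (hc : col a = col b)
    (hz : Z (P ++ a :: b :: Q) (X a ^ k)) : Z (P ++ a :: b :: Q) (X b ^ k) := by
  have h1 := h.mul _ _ (-(X a - X b)) (h.d2 P a b Q k hc hz)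
  rw [neg_mul, Hpoly_mul] at h1
  have := h.add _ _ _ hz h1
  simpa using this

theorem square (h : Sys col Λ Z) {N : ℕ} (ih : IH col Λ Z N) {u : ν} {S : Finset ℤ}
    (hu : col u ∈ S) (P : List ν) (z w v : ν) (Q : List ν)
    (hz : col z = col u) (hw : col w = col u - 1) (hv : col v = col u + 1)
    (hS : ∀ x ∈ P ++ [z, w, v], col x ∈ S) (hN : P.length + 3 ≤ N) :
    Z (P ++ z :: w :: v :: u :: Q) (X u ^ (∑ d ∈ S, Λ d)) := by
  set b := ∑ d ∈ S, Λ d with hb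
  have hzS : col z ∈ S := by rw [hz]; exact hu
  have hwS : col w ∈ S := hS w (by simp)
  have hvS : col v ∈ S := hS v (by simp)
  have hPS : ∀ x ∈ P, col x ∈ S := fun x hx => hS x (by simp [hx])
  have G0 : ∀ (B : List ν) (Q' : List ν), B.length < 3 → (∀ x ∈ B, col x ∈ S) →
      Z (P ++ B ++ z :: u :: Q') (Hpoly b z u) := by
    intro B Q' hB hBS
    apply h.d2 _ _ _ _ _ hz
    apply ih _ _ _ _ (by simp; omega) _ hzS
    intro x hx; rcases List.mem_append.1 hx with hx | hx
    exacts [hPS x hx, hBS x hx]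
  have e1 : Z (P ++ z :: w :: v :: u :: Q) ((X w - X u) * Hpoly b z u) := by
    have g1 : Z (P ++ z :: v :: u :: w :: Q) (Hpoly b z u) := by
      apply h.braid _ _ _ _ _ _ hz (by omega)
      · have := G0 [] (v :: w :: Q) (by simp) (by simp)
        simpa using this
      · have := G0 [v] (w :: Q) (by simp) (by simpa using hvS)
        simpa using this
    have g2 := h.adj (P ++ [z, v]) w u Q _ (by omega)
      (by simpa only [List.append_assoc, List.cons_append, List.nil_append] using g1)
    have g3 := h.far (P ++ [z]) w v (u :: Q) _ (by unfold Far; omega)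
      (by simpa only [List.append_assoc, List.cons_append, List.nil_append] using g2)
    simpa only [List.append_assoc, List.cons_append, List.nil_append] using g3
  have e2 : Z (P ++ z :: w :: v :: u :: Q) ((X z - X w) * Hpoly b z u) := by
    apply h.adj _ _ _ _ _ (by omega)
    have := h.braid (P ++ [w]) z v u Q (Hpoly b z u) hz (by omega)
      (by have := G0 [w] (v :: Q) (by simp) (by simpa using hwS)
          simpa using this)
      (by have := G0 [w, v] Q (by simp) (by simpa using ⟨hwS, hvS⟩)
          simpa using this)
    simpa only [List.append_assoc, List.cons_append, List.nil_append] using this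
  have e3 : Z (P ++ z :: w :: v :: u :: Q) (X z ^ b) :=
    ih P z _ S (by omega) hPS hzS
  have e4 := h.add _ _ _ e1 e2
  rw [← add_mul, show (X w - X u + (X z - X w) : MvPolynomial ν ℤ) = X z - X u by ring,
    Hpoly_mul] at e4
  have e5 := h.mul _ _ (-1) e4
  have e6 := h.add _ _ _ e3 e5
  convert e6 using 1
  ring

theorem triple (h : Sys col Λ Z) {N : ℕ} (ih : IH col Λ Z N) {u : ν} {S : Finset ℤ}
    (hu : col u ∈ S) (P : List ν) (z w : ν) (Q : List ν)
    (hz : col z = col u) (hw : col z = col w + 1 ∨ col w = col z + 1)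
    (hS : ∀ x ∈ P ++ [z, w], col x ∈ S) (hN : P.length + 2 ≤ N) :
    Z (P ++ z :: w :: u :: Q) (X u ^ (∑ d ∈ S, Λ d)) := by
  have hzS : col z ∈ S := by rw [hz]; exact hu
  apply h.braid _ _ _ _ _ _ hz hw
  · have := ih (P ++ [z]) u (w :: Q) S (by simp; omega)
      (by intro x hx; apply hS; simp at hx ⊢; tauto) hu
    simpa using this
  · have := h.d2' (P ++ [w]) z u Q (∑ d ∈ S, Λ d) hz
      (ih _ _ _ _ (by simp; omega) (by intro x hx; apply hS; simp at hx ⊢; tauto) hzS)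
    simpa using this

/-- The case of no earlier bead on the runner of `u`. -/
theorem single (h : Sys col Λ Z) {N : ℕ} (ih : IH col Λ Z N) {u : ν} {S : Finset ℤ}
    (hu : col u ∈ S) {s : ℤ} (hs : s = 1 ∨ s = -1) (R M : List ν) (w : ν) (Q : List ν)
    (hR : ∀ x ∈ R, s * col x + 1 ≤ s * col u) (hw : s * col w = s * col u + 1)
    (hM : ∀ y ∈ M, s * col u + 2 ≤ s * col y)
    (hS : ∀ x ∈ R ++ (M ++ [w]), col x ∈ S) (hN : (R ++ (M ++ [w])).length ≤ N) :
    Z (R ++ (M ++ w :: u :: Q)) (X u ^ (∑ d ∈ S, Λ d)) := by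
  have far_of : ∀ x y : ν, s * col y + 2 ≤ s * col x → Far col x y := by
    intro x y hxy
    unfold Far
    rcases hs with rfl | rfl <;> omega
  set b1 := ∑ d ∈ S.filter (fun d => s * col u + 1 ≤ s * d), Λ d with hb1
  set b2 := ∑ d ∈ S.filter (fun d => ¬ s * col u + 1 ≤ s * d), Λ d with hb2
  have hb : ∑ d ∈ S, Λ d = b1 + b2 := (Finset.sum_filter_add_sum_filter_not _ _ _).symm
  have e1 : Z (R ++ (M ++ w :: u :: Q)) ((X w - X u) * X u ^ b2) := by
    have g0 := ih R u (M ++ w :: Q) (S.filter (fun d => ¬ s * col u + 1 ≤ s * d))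
      (by simp at hN ⊢; omega)
      (by intro x hx; rw [Finset.mem_filter]
          refine ⟨hS x (by simp [hx]), ?_⟩
          have := hR x hx; omega)
      (by rw [Finset.mem_filter]; exact ⟨hu, by omega⟩)
    have g1 := h.moveL u _ (w :: Q) M R (by
      intro y hy
      have h1 := far_of y u (hM y hy)
      unfold Far at *; omega) g0
    have := h.adj (R ++ M) w u Q _ (by rcases hs with rfl | rfl <;> omega) g1
    simpa only [List.append_assoc, List.cons_append, List.nil_append] using this
  have e2 : Z (R ++ (M ++ w :: u :: Q)) (X w ^ b1) := by
    have g0 := ih M w (R ++ u :: Q) (S.filter (fun d => s * col u + 1 ≤ s * d))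
      (by simp at hN ⊢; omega)
      (by intro x hx; rw [Finset.mem_filter]
          refine ⟨hS x (by simp [hx]), ?_⟩
          have := hM x hx; omega)
      (by rw [Finset.mem_filter]; exact ⟨hS w (by simp), by omega⟩)
    have := h.moveLists (X w ^ b1) (M ++ [w]) (u :: Q) R [] (by
      intro x hx y hy
      have h2 : s * col u + 1 ≤ s * col y := by
        rcases List.mem_append.1 hy with hy | hy
        · have := hM y hy; omega
        · simp at hy; rw [hy]; omega
      have h1 := far_of y x (by have := hR x hx; omega)
      unfold Far at *; omega)
      (by simpa only [List.append_assoc, List.cons_append, List.nil_append] using g0)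
    simpa only [List.append_assoc, List.cons_append, List.nil_append] using this
  have e3 := h.mul _ _ (Hpoly b1 w u) e1
  have e4 := h.mul _ _ (X u ^ b2) e2
  have e5 := h.add _ _ _ e4 (h.mul _ _ (-1) e3)
  rw [hb]
  convert e5 using 1
  have := Hpoly_mul b1 w u
  rw [pow_add]
  linear_combination (X u ^ b2) * this

theorem main (h : Sys col Λ Z) : ∀ N, IH col Λ Z N := by
  intro N
  induction N with
  | zero => intro P u Q S hP; simp at hP
  | succ N ih =>
  intro P u Q S hP hPS hu
  replace hP : P.length ≤ N := by omega
  by_cases hex : ∃ x ∈ P, col x = col u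
  · obtain ⟨P0, z, B, rfl, hz, hB⟩ := last_occ (p := fun x => col x = col u) P hex
    rw [List.append_assoc, List.cons_append]
    have hlen : ∀ B : List ν, (B.filter (fun x => col x < col u)).length +
        (B.filter (fun x => col u < col x)).length ≤ B.length := by
      intro B
      induction B with
      | nil => simp
      | cons x B ihB =>
        simp only [List.filter_cons]
        split_ifs with h1 h2 <;> simp at * <;> omega
    have := hlen B
    have sorted := h.sort (X u ^ (∑ d ∈ S, Λ d)) (col u) (u :: Q) B (P0 ++ [z]) hB
    rw [List.append_assoc, List.append_assoc] at sorted
    refine sorted ?_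
    have hLS : ∀ x ∈ B.filter (fun x => col x < col u), col x < col u ∧ col x ∈ S := by
      intro x hx; simp at hx; exact ⟨hx.2, hPS x (by simp [hx.1])⟩
    have hRS : ∀ x ∈ B.filter (fun x => col u < col x), col u < col x ∧ col x ∈ S := by
      intro x hx; simp at hx; exact ⟨hx.2, hPS x (by simp [hx.1])⟩
    generalize B.filter (fun x => col x < col u) = L at *
    generalize B.filter (fun x => col u < col x) = R at *
    have hP0S : ∀ x ∈ P0, col x ∈ S := fun x hx => hPS x (by simp [hx])
    have hzS : col z ∈ S := hPS z (by simp)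
    have hN : P0.length + 1 + L.length + R.length ≤ N := by simp at hP; omega
    have hLR : ∀ x ∈ L, ∀ y ∈ R, Far col x y := by
      intro x hx y hy
      have h1 := hLS x hx; have h2 := hRS y hy
      unfold Far; omega
    have hRL : ∀ x ∈ R, ∀ y ∈ L, Far col x y := by
      intro x hx y hy
      have h1 := hRS x hx; have h2 := hLS y hy
      unfold Far; omega
    have r1 := h.reduce ih hu (s := 1) (Or.inl rfl) Q (P0 ++ z :: L) R
      (by intro x hx; have := hRS x hx; omega)
      (by intro x hx; simp at hx
          rcases hx with hx | rfl | hx | hx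
          exacts [hP0S x hx, hzS, (hLS x hx).2, (hRS x hx).2])
      (by simp; omega)
    have r2 := h.reduce ih hu (s := -1) (Or.inr rfl) Q (P0 ++ z :: R) L
      (by intro x hx; have := hLS x hx; omega)
      (by intro x hx; simp at hx
          rcases hx with hx | rfl | hx | hx
          exacts [hP0S x hx, hzS, (hRS x hx).2, (hLS x hx).2])
      (by simp; omega)
    rcases r1 with r1 | r1
    · simpa only [List.append_assoc, List.cons_append, List.nil_append] using r1
    rcases r2 with r2 | r2
    · have t := h.moveLists _ R (u :: Q) L (P0 ++ [z]) hLR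
        (by simpa only [List.append_assoc, List.cons_append, List.nil_append] using r2)
      simpa only [List.append_assoc, List.cons_append, List.nil_append] using t
    rcases r1 with rfl | ⟨M2, v, rfl, hv, hM2⟩
    · rcases r2 with rfl | ⟨M1, w, rfl, hw, hM1⟩
      · have := h.d2' P0 z u Q (∑ d ∈ S, Λ d) hz (ih P0 z _ S (by simp at hN; omega) hP0S hzS)
        simpa using this
      · have := h.triple ih hu (P0 ++ M1) z w Q hz (by omega)
          (by intro x hx; simp at hx
              rcases hx with hx | hx | rfl | rfl
              exacts [hP0S x hx, (hLS x (by simp [hx])).2, hzS, (hLS x (by simp)).2])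
          (by simp at hN ⊢; omega)
        have := h.moveR z _ (w :: u :: Q) M1 P0
          (by intro y hy; have := hM1 y hy; unfold Far; omega) this
        simpa using this
    · rcases r2 with rfl | ⟨M1, w, rfl, hw, hM1⟩
      · have := h.triple ih hu (P0 ++ M2) z v Q hz (by omega)
          (by intro x hx; simp at hx
              rcases hx with hx | hx | rfl | rfl
              exacts [hP0S x hx, (hRS x (by simp [hx])).2, hzS, (hRS x (by simp)).2])
          (by simp at hN ⊢; omega)
        have := h.moveR z _ (v :: u :: Q) M2 P0
          (by intro y hy; have := hM2 y hy; unfold Far; omega) this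
        simpa using this
      · have := h.square ih hu (P0 ++ (M1 ++ M2)) z w v Q hz (by omega) (by omega)
          (by intro x hx; simp at hx
              rcases hx with hx | hx | hx | rfl | rfl | rfl
              exacts [hP0S x hx, (hLS x (by simp [hx])).2, (hRS x (by simp [hx])).2, hzS,
                (hLS x (by simp)).2, (hRS x (by simp)).2])
          (by simp at hN ⊢; omega)
        have t1 := h.moveR z _ (w :: v :: u :: Q) (M1 ++ M2) P0
          (by intro y hy
              rcases List.mem_append.1 hy with hy | hy
              · have := hM1 y hy; unfold Far; omega
              · have := hM2 y hy; unfold Far; omega) this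
        have t2 := h.moveLists _ M2 (v :: u :: Q) [w] (P0 ++ z :: M1)
          (by intro x hx y hy
              simp at hx; subst hx
              have := hM2 y hy; unfold Far; omega)
          (by simpa using t1)
        simpa using t2
  · push Not at hex
    have sorted := h.sort (X u ^ (∑ d ∈ S, Λ d)) (col u) (u :: Q) P [] hex
    rw [List.nil_append, List.nil_append] at sorted
    refine sorted ?_
    have hlen : ∀ B : List ν, (B.filter (fun x => col x < col u)).length +
        (B.filter (fun x => col u < col x)).length ≤ B.length := by
      intro B
      induction B with
      | nil => simp
      | cons x B ihB =>
        simp only [List.filter_cons]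
        split_ifs with h1 h2 <;> simp at * <;> omega
    have := hlen P
    have hLS : ∀ x ∈ P.filter (fun x => col x < col u), col x < col u ∧ col x ∈ S := by
      intro x hx; simp at hx; exact ⟨hx.2, hPS x (by simp [hx.1])⟩
    have hRS : ∀ x ∈ P.filter (fun x => col u < col x), col u < col x ∧ col x ∈ S := by
      intro x hx; simp at hx; exact ⟨hx.2, hPS x (by simp [hx.1])⟩
    generalize P.filter (fun x => col x < col u) = L at *
    generalize P.filter (fun x => col u < col x) = R at *
    have hN : L.length + R.length ≤ N := by omega
    have hLR : ∀ x ∈ L, ∀ y ∈ R, Far col x y := by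
      intro x hx y hy
      have h1 := hLS x hx; have h2 := hRS y hy
      unfold Far; omega
    have r1 := h.reduce ih hu (s := 1) (Or.inl rfl) Q L R
      (by intro x hx; have := hRS x hx; omega)
      (by intro x hx; simp at hx
          rcases hx with hx | hx
          exacts [(hLS x hx).2, (hRS x hx).2])
      (by simp; omega)
    have r2 := h.reduce ih hu (s := -1) (Or.inr rfl) Q R L
      (by intro x hx; have := hLS x hx; omega)
      (by intro x hx; simp at hx
          rcases hx with hx | hx
          exacts [(hRS x hx).2, (hLS x hx).2])
      (by simp; omega)
    rcases r1 with r1 | rfl | ⟨M2, v, rfl, hv, hM2⟩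
    · exact r1
    · rcases r2 with r2 | rfl | ⟨M1, w, rfl, hw, hM1⟩
      · simpa using r2
      · refine h.pow_le ?_ (h.cyc u Q)
        exact Finset.single_le_sum (f := Λ) (fun _ _ => Nat.zero_le _) hu
      · have := h.single ih hu (s := -1) (Or.inr rfl) [] M1 w Q (by simp) hw hM1
          (by intro x hx; exact (hLS x (by simpa using hx)).2) (by simp at hN ⊢; omega)
        simpa using this
    · have := h.single ih hu (s := 1) (Or.inl rfl) L M2 v Q
        (by intro x hx; have := hLS x hx; omega) hv hM2
        (by intro x hx
            rcases List.mem_append.1 hx with hx | hx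
            exacts [(hLS x hx).2, (hRS x hx).2])
        (by simp at hN ⊢; omega)
      simpa using this

end Sys

section Concrete

open MvPolynomial

theorem exists_eval {ι A : Type} [Ring A] (y : ι → A) (hy : ∀ a b, y a * y b = y b * y a) :
    ∃ φ : MvPolynomial ι ℤ →+* A, ∀ n, φ (X n) = y n := by
  letI : CommRing (Algebra.adjoin ℤ (Set.range y)) :=
    Algebra.adjoinCommRingOfComm ℤ (by
      rintro _ ⟨a, rfl⟩ _ ⟨b, rfl⟩; exact hy a b)
  let z : ι → Algebra.adjoin ℤ (Set.range y) :=
    fun n => ⟨y n, Algebra.subset_adjoin ⟨n, rfl⟩⟩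
  let φ0 : MvPolynomial ι ℤ →+* Algebra.adjoin ℤ (Set.range y) :=
    eval₂Hom (Int.castRingHom _) z
  refine ⟨(Algebra.adjoin ℤ (Set.range y)).val.toRingHom.comp φ0, ?_⟩
  intro n
  simp [φ0, z]

/-- Sign of a runner. -/
def sgn (c : ℤ) : ℤ := if Even c then 1 else -1

theorem sgn_mul_self (c : ℤ) : sgn c * sgn c = 1 := by
  unfold sgn; split_ifs <;> norm_num

theorem sgn_adj {c d : ℤ} (h : c = d + 1 ∨ d = c + 1) : sgn c = - sgn d := by
  unfold sgn
  rcases h with h | h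
  · rw [h]; by_cases hd : Even d <;> simp only [Int.even_add_one, hd] <;> simp
  · rw [h]; by_cases hc : Even c <;> simp only [Int.even_add_one, hc] <;> simp

variable {m : ℕ} {A : Type} [Ring A] {Λ : ℤ →₀ ℕ}

theorem exists_ev (K : CycKLR ℤ adjZ m A Λ) (q : Fin m → ℤ) (σ : Equiv.Perm (Fin m)) :
    ∃ φ : MvPolynomial (Fin m) ℤ →+* A,
      ∀ n, φ (X n) = (sgn (q n) : A) * K.x (σ⁻¹ n) (q ∘ σ) := by
  apply exists_eval
  intro a b
  have h := K.x_mul_x (σ⁻¹ a) (σ⁻¹ b) (q ∘ σ)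
  have c1 := Int.cast_commute (sgn (q a)) (K.x (σ⁻¹ b) (q ∘ σ))
  have c2 := Int.cast_commute (sgn (q b)) (K.x (σ⁻¹ a) (q ∘ σ))
  have c3 := Int.cast_commute (sgn (q a)) ((sgn (q b) : ℤ) : A)
  exact ((c3.mul_right c1).mul_left (c2.symm.mul_right h))

/-- Evaluation of a polynomial in named dots at the arrangement `σ`. -/
noncomputable def ev (K : CycKLR ℤ adjZ m A Λ) (q : Fin m → ℤ) (σ : Equiv.Perm (Fin m)) :
    MvPolynomial (Fin m) ℤ →+* A := (exists_ev K q σ).choose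

theorem ev_X (K : CycKLR ℤ adjZ m A Λ) (q : Fin m → ℤ) (σ : Equiv.Perm (Fin m)) (n : Fin m) :
    ev K q σ (X n) = (sgn (q n) : A) * K.x (σ⁻¹ n) (q ∘ σ) := (exists_ev K q σ).choose_spec n

theorem ev_C (K : CycKLR ℤ adjZ m A Λ) (q : Fin m → ℤ) (σ : Equiv.Perm (Fin m)) (z : ℤ) :
    ev K q σ (C z) = (z : A) := by
  have := map_intCast (ev K q σ) z
  rw [← this]; congr 1

theorem ev_e (K : CycKLR ℤ adjZ m A Λ) (q : Fin m → ℤ) (σ : Equiv.Perm (Fin m))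
    (f : MvPolynomial (Fin m) ℤ) :
    ev K q σ f * K.e (q ∘ σ) = K.e (q ∘ σ) * ev K q σ f := by
  change Commute _ _
  induction f using MvPolynomial.induction_on with
  | C a => rw [ev_C]; exact Int.cast_commute _ _
  | add p r hp hr => rw [map_add]; exact hp.add_left hr
  | mul_X p n hp =>
    rw [map_mul, ev_X]
    refine hp.mul_left ((Int.cast_commute _ _).mul_left ?_)
    change _ * _ = _ * _
    rw [K.x_mul_e, K.e_mul_x]

theorem comp_swap (q : Fin m → ℤ) (σ : Equiv.Perm (Fin m)) (r : ℕ) (h : r + 1 < m) :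
    q ∘ (σ * Equiv.swap (⟨r, Nat.lt_of_succ_lt h⟩ : Fin m) ⟨r + 1, h⟩ : Equiv.Perm (Fin m)) =
      swapSeq r (q ∘ σ) := by
  funext k
  simp [swapSeq, h]

theorem ev_δ (K : CycKLR ℤ adjZ m A Λ) (q : Fin m → ℤ) (σ : Equiv.Perm (Fin m))
    (r : ℕ) (h : r + 1 < m) (hne : q (σ ⟨r, Nat.lt_of_succ_lt h⟩) ≠ q (σ ⟨r + 1, h⟩))
    (f : MvPolynomial (Fin m) ℤ) :
    K.δ r (q ∘ σ) * ev K q σ f =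
      ev K q (σ * Equiv.swap (⟨r, Nat.lt_of_succ_lt h⟩ : Fin m) ⟨r + 1, h⟩) f * K.δ r (q ∘ σ) := by
  induction f using MvPolynomial.induction_on with
  | C a => rw [ev_C, ev_C]; exact ((Int.cast_commute a (K.δ r (q ∘ σ))).symm).eq
  | add p s hp hr => rw [map_add, map_add, mul_add, hp, hr, add_mul]
  | mul_X p n hp =>
    rw [map_mul, map_mul, ← mul_assoc, hp, mul_assoc, mul_assoc]
    congr 1
    rw [ev_X, ev_X, comp_swap, ← mul_assoc, (Int.cast_commute (sgn (q n)) (K.δ r (q ∘ σ))).symm.eq,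
      mul_assoc, mul_assoc]
    congr 1
    rw [mul_inv_rev, Equiv.swap_inv, Equiv.Perm.mul_apply]
    generalize hk : σ⁻¹ n = k
    by_cases h1 : k = ⟨r, Nat.lt_of_succ_lt h⟩
    · subst h1
      rw [Equiv.swap_apply_left]
      exact K.δx_diff1 r h _ hne
    by_cases h2 : k = ⟨r + 1, h⟩
    · subst h2
      rw [Equiv.swap_apply_right]
      exact K.δx_diff2 r h _ hne
    rw [Equiv.swap_apply_of_ne_of_ne h1 h2]
    exact K.δx_far r k _ (fun hh => h1 (Fin.ext hh)) (fun hh => h2 (Fin.ext hh))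

/-- Pulling a vanishing polynomial through a crossing of different colours. -/
theorem pull (K : CycKLR ℤ adjZ m A Λ) (q : Fin m → ℤ) (σ : Equiv.Perm (Fin m))
    (r : ℕ) (h : r + 1 < m) (hne : q (σ ⟨r, Nat.lt_of_succ_lt h⟩) ≠ q (σ ⟨r + 1, h⟩))
    (f : MvPolynomial (Fin m) ℤ)
    (hz : ev K q (σ * Equiv.swap (⟨r, Nat.lt_of_succ_lt h⟩ : Fin m) ⟨r + 1, h⟩) f *
      K.e (swapSeq r (q ∘ σ)) = 0) :
    ev K q σ f * K.δ r (swapSeq r (q ∘ σ)) = 0 := by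
  have h1 := ev_δ K q (σ * Equiv.swap (⟨r, Nat.lt_of_succ_lt h⟩ : Fin m) ⟨r + 1, h⟩) r h
    (by simpa using hne.symm) f
  have h2 := ev_e K q (σ * Equiv.swap (⟨r, Nat.lt_of_succ_lt h⟩ : Fin m) ⟨r + 1, h⟩) f
  rw [mul_assoc σ, Equiv.swap_mul_self, mul_one, comp_swap] at h1
  rw [comp_swap] at h2
  rw [← h1, ← K.δ_mul_e r (swapSeq r (q ∘ σ)), mul_assoc, ← h2, hz, mul_zero]

theorem swapSeq_same {r : ℕ} (h : r + 1 < m) (i : Fin m → ℤ)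
    (hi : i ⟨r, Nat.lt_of_succ_lt h⟩ = i ⟨r + 1, h⟩) : swapSeq r i = i := by
  funext k
  simp only [swapSeq, h, dif_pos]
  by_cases h1 : k = ⟨r, Nat.lt_of_succ_lt h⟩
  · subst h1; rw [Equiv.swap_apply_left, hi]
  by_cases h2 : k = ⟨r + 1, h⟩
  · subst h2; rw [Equiv.swap_apply_right, hi]
  rw [Equiv.swap_apply_of_ne_of_ne h1 h2]

theorem demazure (K : CycKLR ℤ adjZ m A Λ) (q : Fin m → ℤ) (σ : Equiv.Perm (Fin m))
    (r : ℕ) (h : r + 1 < m) (a b : Fin m) (ha : σ ⟨r, Nat.lt_of_succ_lt h⟩ = a)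
    (hb : σ ⟨r + 1, h⟩ = b) (hq : q a = q b) (f : MvPolynomial (Fin m) ℤ) :
    ∃ g, (X a - X b) * g = f - rename (Equiv.swap a b) f ∧
      K.δ r (q ∘ σ) * ev K q σ f = ev K q σ (rename (Equiv.swap a b) f) * K.δ r (q ∘ σ) +
        (sgn (q a) : A) * (ev K q σ g * K.e (q ∘ σ)) := by
  have hi : (q ∘ σ) ⟨r, Nat.lt_of_succ_lt h⟩ = (q ∘ σ) ⟨r + 1, h⟩ := by simp [ha, hb, hq]
  have hss := swapSeq_same h (q ∘ σ) hi
  induction f using MvPolynomial.induction_on with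
  | C z =>
    refine ⟨0, by simp, ?_⟩
    rw [rename_C, ev_C]
    simpa using ((Int.cast_commute z _).symm : Commute _ _).eq
  | add p s hp hs =>
    obtain ⟨g1, e1, d1⟩ := hp
    obtain ⟨g2, e2, d2⟩ := hs
    refine ⟨g1 + g2, ?_, ?_⟩
    · rw [mul_add, e1, e2, map_add]; ring
    · simp only [map_add, mul_add, add_mul, d1, d2]; abel
  | mul_X p n hp =>
    obtain ⟨g1, e1, d1⟩ := hp
    have key : ∃ g2, (X a - X b) * g2 = X n - rename (Equiv.swap a b) (X n) ∧
      K.δ r (q ∘ σ) * ev K q σ (X n) =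
        ev K q σ (rename (Equiv.swap a b) (X n)) * K.δ r (q ∘ σ) +
        (sgn (q a) : A) * (ev K q σ g2 * K.e (q ∘ σ)) := by
      by_cases h1 : n = a
      · subst h1
        refine ⟨1, by simp, ?_⟩
        have := K.δx_same1 r h (q ∘ σ) hi
        rw [hss] at this
        have hn : σ⁻¹ n = ⟨r, Nat.lt_of_succ_lt h⟩ := by rw [← ha]; simp
        have hn' : σ⁻¹ b = ⟨r + 1, h⟩ := by rw [← hb]; simp
        rw [rename_X, Equiv.swap_apply_left, ev_X, ev_X, hn, hn', map_one, one_mul, ← this, hq,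
          ← mul_assoc, (Int.cast_commute (sgn (q b)) (K.δ r (q ∘ σ))).symm.eq]
        simp only [mul_assoc, mul_sub]
        abel
      by_cases h2 : n = b
      · subst h2
        refine ⟨-1, by simp, ?_⟩
        have := K.δx_same2 r h (q ∘ σ) hi
        rw [hss] at this
        have hn : σ⁻¹ n = ⟨r + 1, h⟩ := by rw [← hb]; simp
        have hn' : σ⁻¹ a = ⟨r, Nat.lt_of_succ_lt h⟩ := by rw [← ha]; simp
        rw [rename_X, Equiv.swap_apply_right, ev_X, ev_X, hn, hn', map_neg, map_one, neg_one_mul,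
          ← this, hq,
          ← mul_assoc, (Int.cast_commute (sgn (q n)) (K.δ r (q ∘ σ))).symm.eq]
        simp only [mul_assoc, mul_sub, mul_neg]
        abel
      · refine ⟨0, ?_, ?_⟩
        · rw [rename_X, Equiv.swap_apply_of_ne_of_ne h1 h2]; simp
        · have hk1 : (σ⁻¹ n).val ≠ r := by
            intro hh; apply h1; rw [← ha]
            have : σ⁻¹ n = ⟨r, Nat.lt_of_succ_lt h⟩ := Fin.ext hh
            rw [← this]; simp
          have hk2 : (σ⁻¹ n).val ≠ r + 1 := by
            intro hh; apply h2; rw [← hb]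
            have : σ⁻¹ n = ⟨r + 1, h⟩ := Fin.ext hh
            rw [← this]; simp
          have := K.δx_far r (σ⁻¹ n) (q ∘ σ) hk1 hk2
          rw [hss] at this
          rw [rename_X, Equiv.swap_apply_of_ne_of_ne h1 h2, ev_X, ← mul_assoc,
            (Int.cast_commute (sgn (q n)) (K.δ r (q ∘ σ))).symm.eq, mul_assoc, mul_assoc, this]
          simp
    obtain ⟨g2, e2, d2⟩ := key
    refine ⟨g1 * X n + rename (Equiv.swap a b) p * g2, ?_, ?_⟩
    · rw [map_mul]
      linear_combination (X n) * e1 + rename (Equiv.swap a b) p * e2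
    · rw [map_mul, ← mul_assoc, d1, add_mul, mul_assoc, d2, map_mul, map_mul, map_add, map_mul,
        map_mul]
      have c1 := ev_e K q σ (X n)
      have c2 := (Int.cast_commute (sgn (q a)) (ev K q σ (rename (Equiv.swap a b) p))).symm.eq
      simp only [mul_add, add_mul, mul_assoc, c1]
      rw [← mul_assoc (ev K q σ (rename (Equiv.swap a b) p)) (sgn (q a) : A), c2]
      simp only [mul_assoc]
      abel

theorem demazure_rule (K : CycKLR ℤ adjZ m A Λ) (q : Fin m → ℤ) (σ : Equiv.Perm (Fin m))
    (r : ℕ) (h : r + 1 < m) (a b : Fin m) (ha : σ ⟨r, Nat.lt_of_succ_lt h⟩ = a)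
    (hb : σ ⟨r + 1, h⟩ = b) (hq : q a = q b) (f g : MvPolynomial (Fin m) ℤ)
    (hf : ev K q σ f * K.e (q ∘ σ) = 0)
    (hg : (X a - X b) * g = f - rename (Equiv.swap a b) f) :
    ev K q σ g * K.e (q ∘ σ) = 0 := by
  have hi : (q ∘ σ) ⟨r, Nat.lt_of_succ_lt h⟩ = (q ∘ σ) ⟨r + 1, h⟩ := by simp [ha, hb, hq]
  have hss := swapSeq_same h (q ∘ σ) hi
  have hab : a ≠ b := by
    rw [← ha, ← hb]; intro hh
    have := σ.injective hh
    simp at this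
  obtain ⟨g', e1, d1⟩ := demazure K q σ r h a b ha hb hq f
  have hX : (X a - X b : MvPolynomial (Fin m) ℤ) ≠ 0 := by
    rw [sub_ne_zero]; intro hh; exact hab (X_injective hh)
  have : g = g' := mul_left_cancel₀ hX (hg.trans e1.symm)
  subst this
  have z1 : K.δ r (q ∘ σ) * ev K q σ f = 0 := by
    rw [← K.δ_mul_e, mul_assoc, ← ev_e, hf, mul_zero]
  have dd := K.δδ_same r h (q ∘ σ) hi
  have ed := K.e_mul_δ r (q ∘ σ)
  rw [hss] at dd ed
  have z2 : ev K q σ g * K.δ r (q ∘ σ) = 0 := by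
    have := congrArg (fun t => (sgn (q a) : A) * (t * K.δ r (q ∘ σ))) d1
    simp only [z1, zero_mul, mul_zero, add_mul, mul_assoc, dd, ed, zero_add] at this
    rw [← mul_assoc, ← Int.cast_mul, sgn_mul_self, Int.cast_one, one_mul] at this
    exact this.symm
  have hs2 := K.δx_same2 r h (q ∘ σ) hi
  rw [hss] at hs2
  have hxa : K.x ⟨r, Nat.lt_of_succ_lt h⟩ (q ∘ σ) = (sgn (q a) : A) * ev K q σ (X a) := by
    have hn' : σ⁻¹ a = ⟨r, Nat.lt_of_succ_lt h⟩ := by rw [← ha]; simp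
    rw [ev_X, hn', ← mul_assoc, ← Int.cast_mul, sgn_mul_self, Int.cast_one, one_mul]
  have hcomm : ev K q σ g * K.x ⟨r, Nat.lt_of_succ_lt h⟩ (q ∘ σ) =
      K.x ⟨r, Nat.lt_of_succ_lt h⟩ (q ∘ σ) * ev K q σ g := by
    rw [hxa]
    have c1 : Commute (ev K q σ g) (ev K q σ (X a)) := by
      change _ * _ = _ * _
      rw [← map_mul, mul_comm, map_mul]
    exact ((Int.cast_commute (sgn (q a)) (ev K q σ g)).symm.mul_right c1).eq
  rw [← hs2, mul_sub, ← mul_assoc, hcomm, mul_assoc, z2, ← mul_assoc, z2]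
  simp

theorem list_swap (σ : Equiv.Perm (Fin m)) (P : List (Fin m)) (a b : Fin m) (Q : List (Fin m))
    (hl : List.ofFn σ = P ++ a :: b :: Q) :
    ∃ h : P.length + 1 < m, σ ⟨P.length, Nat.lt_of_succ_lt h⟩ = a ∧ σ ⟨P.length + 1, h⟩ = b ∧
      List.ofFn (σ * Equiv.swap (⟨P.length, Nat.lt_of_succ_lt h⟩ : Fin m) ⟨P.length + 1, h⟩ :
        Equiv.Perm (Fin m)) = P ++ b :: a :: Q := by
  have hlen := congrArg List.length hl
  simp at hlen
  have h : P.length + 1 < m := by omega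
  have hk : ∀ (k : ℕ) (hk : k < m), σ ⟨k, hk⟩ = (P ++ a :: b :: Q)[k]'(by simp; omega) := by
    intro k hk
    simp only [← hl]
    simp
  refine ⟨h, ?_, ?_, ?_⟩
  · rw [hk]; simp
  · rw [hk]; simp
  · apply List.ext_getElem
    · simp; omega
    · intro k h1 h2
      simp only [List.length_ofFn] at h1
      rw [List.getElem_ofFn, Equiv.Perm.mul_apply]
      by_cases c1 : k = P.length
      · subst c1
        rw [Equiv.swap_apply_left, hk]; simp
      by_cases c2 : k = P.length + 1
      · subst c2
        rw [Equiv.swap_apply_right, hk]; simp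
      rw [Equiv.swap_apply_of_ne_of_ne (by simpa [Fin.ext_iff] using c1)
        (by simpa [Fin.ext_iff] using c2), hk]
      rcases Nat.lt_or_ge k P.length with c3 | c3
      · rw [List.getElem_append_left c3, List.getElem_append_left c3]
      · rw [List.getElem_append_right c3, List.getElem_append_right c3]
        obtain ⟨d, hd⟩ : ∃ d, k - P.length = d + 2 := ⟨k - P.length - 2, by omega⟩
        simp [hd]

/-- A polynomial annihilates the idempotent attached to the arrangement `l`. -/
def Zr (K : CycKLR ℤ adjZ m A Λ) (q : Fin m → ℤ) (l : List (Fin m))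
    (f : MvPolynomial (Fin m) ℤ) : Prop :=
  ∀ σ : Equiv.Perm (Fin m), List.ofFn σ = l → ev K q σ f * K.e (q ∘ σ) = 0

theorem adjZ_iff (c d : ℤ) : adjZ c d ↔ (c = d + 1 ∨ d = c + 1) := by
  unfold adjZ; omega

theorem nodup_of (σ : Equiv.Perm (Fin m)) {l : List (Fin m)} (hl : List.ofFn σ = l) :
    l.Nodup := by
  rw [← hl]; exact List.nodup_ofFn.2 σ.injective

theorem sys (K : CycKLR ℤ adjZ m A Λ) (q : Fin m → ℤ) : Sys q Λ (Zr K q) where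
  add l f g hf hg σ hσ := by rw [map_add, add_mul, hf σ hσ, hg σ hσ, add_zero]
  mul l f g hf σ hσ := by rw [map_mul, mul_assoc, hf σ hσ, mul_zero]
  far P a b Q f hfar hz σ hσ := by
    obtain ⟨h, ha, hb, hl⟩ := list_swap σ P a b Q hσ
    have hz' := hz _ hl
    rw [comp_swap] at hz'
    unfold Far at hfar
    have hne : q (σ ⟨P.length, Nat.lt_of_succ_lt h⟩) ≠ q (σ ⟨P.length + 1, h⟩) := by
      rw [ha, hb]; omega
    have hp := pull K q σ _ h hne f hz'
    rw [← K.δδ_orth P.length h (q ∘ σ) hne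
      (by rw [adjZ_iff]; simp only [Function.comp_apply, ha, hb]; omega), ← mul_assoc, hp, zero_mul]
  adj P a b Q f hadj hz σ hσ := by
    obtain ⟨h, ha, hb, hl⟩ := list_swap σ P a b Q hσ
    have hz' := hz _ hl
    rw [comp_swap] at hz'
    have hne : q (σ ⟨P.length, Nat.lt_of_succ_lt h⟩) ≠ q (σ ⟨P.length + 1, h⟩) := by
      rw [ha, hb]; omega
    have hp := pull K q σ _ h hne f hz'
    have hdd := K.δδ_adj P.length h (q ∘ σ)
      (by rw [adjZ_iff]; simp only [Function.comp_apply, ha, hb]; omega)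
    have h1 : σ⁻¹ a = ⟨P.length, Nat.lt_of_succ_lt h⟩ := by rw [← ha]; simp
    have h2 : σ⁻¹ b = ⟨P.length + 1, h⟩ := by rw [← hb]; simp
    have hX : ev K q σ (X a - X b) * K.e (q ∘ σ) = (sgn (q a) : A) *
        (K.δ P.length (swapSeq P.length (q ∘ σ)) * K.δ P.length (q ∘ σ)) := by
      rw [hdd, map_sub, ev_X, ev_X, h1, h2, sgn_adj hadj, sub_mul, mul_assoc, mul_assoc, K.x_mul_e,
        K.x_mul_e]
      push_cast
      noncomm_ring
    rw [mul_comm, map_mul, mul_assoc, hX, ← mul_assoc,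
      (Int.cast_commute (sgn (q a)) (ev K q σ f)).symm.eq, mul_assoc, ← mul_assoc (ev K q σ f), hp]
    simp
  d1 P a b Q c u k hq hc hu hz σ hσ := by
    obtain ⟨h, ha, hb, hl⟩ := list_swap σ P a b Q hσ
    have hnd := nodup_of σ hσ
    have hnd2 := (List.nodup_append.1 hnd).2.1
    simp only [List.nodup_cons, List.mem_cons, not_or] at hnd2
    have hca : c ≠ a := by rintro rfl; exact hnd2.1.2 hc
    have hcb : c ≠ b := by rintro rfl; exact hnd2.2.1 hc
    have hua : u ≠ a := by rintro rfl; exact hnd2.1.2 hu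
    have hub : u ≠ b := by rintro rfl; exact hnd2.2.1 hu
    have := demazure_rule K q σ P.length h a b ha hb hq _ (-(X u ^ k)) (hz σ hσ) (by
      simp only [map_mul, map_sub, map_pow, rename_X, Equiv.swap_apply_right,
        Equiv.swap_apply_of_ne_of_ne hca hcb, Equiv.swap_apply_of_ne_of_ne hua hub]
      ring)
    rw [map_neg, neg_mul, neg_eq_zero] at this
    exact this
  d2 P a b Q k hq hz σ hσ := by
    obtain ⟨h, ha, hb, hl⟩ := list_swap σ P a b Q hσ
    exact demazure_rule K q σ P.length h a b ha hb hq _ (Hpoly k a b) (hz σ hσ) (by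
      rw [Sys.Hpoly_mul, map_pow, rename_X, Equiv.swap_apply_left])
  braid P a w b Q f hab hadj hz1 hz2 σ hσ := by
    obtain ⟨h, ha, hw, hl⟩ := list_swap σ P a w (b :: Q) hσ
    obtain ⟨h', hw', hb, hl'⟩ := list_swap σ (P ++ [a]) w b Q (by simpa using hσ)
    have hlen : (P ++ [a]).length = P.length + 1 := by simp
    simp only [hlen] at h' hw' hb hl'
    have z1 := hz2 _ hl
    simp only [List.append_assoc, List.cons_append, List.nil_append] at hl'
    have z2 := hz1 _ hl'
    rw [comp_swap] at z1 z2
    have hne1 : q (σ ⟨P.length, Nat.lt_of_succ_lt h⟩) ≠ q (σ ⟨P.length + 1, h⟩) := by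
      rw [ha, hw]; omega
    have hne2 : q (σ ⟨P.length + 1, Nat.lt_of_succ_lt h'⟩) ≠ q (σ ⟨P.length + 1 + 1, h'⟩) := by
      rw [hw, hb]; omega
    have p1 := pull K q σ _ h hne1 f z1
    have p2 := pull K q σ _ h' hne2 f z2
    have s1 : swapSeq (P.length + 1) (swapSeq P.length (q ∘ σ)) = swapSeq P.length (q ∘ σ) := by
      apply swapSeq_same h'
      have h1 : (⟨P.length + 1 + 1, h'⟩ : Fin m) ≠ ⟨P.length, Nat.lt_of_succ_lt h⟩ := by
        rw [Ne, Fin.mk.injEq]; omega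
      have h2 : (⟨P.length + 1 + 1, h'⟩ : Fin m) ≠ ⟨P.length + 1, h⟩ := by simp
      simp only [swapSeq, h, dif_pos, Equiv.swap_apply_right, Equiv.swap_apply_of_ne_of_ne h1 h2,
        Function.comp_apply, ha, hb, hab]
    have s2 : swapSeq P.length (swapSeq (P.length + 1) (q ∘ σ)) =
        swapSeq (P.length + 1) (q ∘ σ) := by
      apply swapSeq_same h
      have h1 : (⟨P.length, Nat.lt_of_succ_lt h⟩ : Fin m) ≠ ⟨P.length + 1 + 1, h'⟩ := by
        rw [Ne, Fin.mk.injEq]; omega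
      have h2 : (⟨P.length, Nat.lt_of_succ_lt h⟩ : Fin m) ≠ ⟨P.length + 1, h⟩ := by simp
      simp only [swapSeq, h', dif_pos, Equiv.swap_apply_left, Equiv.swap_apply_of_ne_of_ne h2 h1,
        Function.comp_apply, ha, hb, hab]
    have hbr := K.braid_hard P.length h' (q ∘ σ)
      (by simp only [Function.comp_apply]; rw [ha]; exact hab.trans (congrArg q hb.symm))
      (by rw [adjZ_iff]; simp only [Function.comp_apply, ha, hw]; exact hadj)
    rw [s1, s2] at hbr
    rw [← hbr, mul_sub]
    simp only [← mul_assoc]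
    rw [p1, p2]
    simp
  cyc a Q σ hσ := by
    have hm : 0 < m := by
      have := congrArg List.length hσ
      simp at this; omega
    have h0 : σ ⟨0, hm⟩ = a := by
      have : (List.ofFn σ)[0]'(by simpa using hm) = a := by simp only [hσ]; simp
      simpa using this
    have h1 : σ⁻¹ a = ⟨0, hm⟩ := by rw [← h0]; simp
    have hc := K.cyc hm (q ∘ σ)
    rw [Function.comp_apply, h0] at hc
    rw [map_pow, ev_X, h1, (Int.cast_commute (sgn (q a)) _).mul_pow, mul_assoc, hc, mul_zero]

end Concrete

/-- Brundan–Kleshchev conjecture.  If `ℓ = ℓ(Λ) = Σ_i λ_i` is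
the level of `Λ`, then `x_{r,i}^ℓ = 0` in `R_ν^Λ` for every sequence
`i ∈ Seq(ν)` and every strand `r`, for the quiver of type `A_∞`. -/
theorem level_nilpotency {m : ℕ} {A : Type} [Ring A] {Λ : ℤ →₀ ℕ}
    (K : CycKLR ℤ adjZ m A Λ) (q : Fin m → ℤ) (r : Fin m) :
    K.x r q ^ (Λ.sum fun _ n => n) * K.e q = 0 := by
  set S : Finset ℤ := Λ.support ∪ Finset.univ.image q with hSdef
  have hS : (Λ.sum fun _ n => n) = ∑ d ∈ S, Λ d := by
    rw [Finsupp.sum]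
    apply Finset.sum_subset (Finset.subset_union_left)
    intro x _ hx
    simpa using hx
  have hmem : ∀ k, q k ∈ S := fun k => by simp [hSdef]
  obtain ⟨P, Q, hPQ⟩ : ∃ P Q, List.ofFn (1 : Equiv.Perm (Fin m)) = P ++ r :: Q := by
    apply List.append_of_mem
    rw [List.mem_ofFn]
    exact ⟨r, rfl⟩
  have key := (sys K q).main (P.length + 1) P r Q S (by omega) (fun a _ => hmem a) (hmem r) 1 hPQ
  rw [map_pow, ev_X, ← hS] at key
  change ((sgn (q r) : A) * K.x r q) ^ _ * K.e q = 0 at key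
  rw [(Int.cast_commute (sgn (q r)) _).mul_pow, mul_assoc] at key
  have h2 := congrArg (fun t => (sgn (q r) : A) ^ (Λ.sum fun _ n => n) * t) key
  simp only [mul_zero] at h2
  rw [← mul_assoc, ← (Commute.refl ((sgn (q r) : ℤ) : A)).mul_pow, ← Int.cast_mul, sgn_mul_self, Int.cast_one, one_pow, one_mul] at h2
  exact h2

end KLRPaper
end

section
/- Let i = i' i_r i_r i_{r+2} i'' with i_r · i_{r+2} = -1 and i_r not adjacent to any entry of i''. Then i has an m-factorization through two copies of the sequence i' i_r i_{r+2} i'' i_r, and consequently if b is the antigravity bound making x_{m-?, i' i_r i_{r+2} i''}^b = 0, then x_{m,i}^b = 0 in R_ν^Λ; moreover the antigravity bounds of i and i' i_r i_{r+2} i'' (related by a stack move) coincide. -/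
namespace KLRPaper


/-- `i` has an `r`-factorization through the finite family of sequences `j a`
(with the `r`-th strand of `i` occurring at position `t a` of `j a`): the
idempotent `1_i` factors as `Σ_a u_a v_a` where `u_a ∈ 1_i A 1_{j_a}` and
`v_a ∈ 1_{j_a} A 1_i` are built from the minimal diagrams `(_{i}1_{j_a})` and
`(_{j_a}1_{i})` bordered by elements of `R_{i',i_r,i'''}`, so that the dot on the
`r`-th strand of `i` slides through them onto the `t a`-th strand of `j a`. -/
def RFactorization {I : Type} [DecidableEq I] {adj : I → I → Prop} {m : ℕ}
    {A : Type} [Ring A] (K : KLR I adj m A) (i : Fin m → I) (r : Fin m)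
    {n : ℕ} (j : Fin n → (Fin m → I)) (t : Fin n → Fin m) : Prop :=
  ∃ u v : Fin n → A,
    (∀ a, u a = K.e i * u a * K.e (j a)) ∧
    (∀ a, v a = K.e (j a) * v a * K.e i) ∧
    (∀ a, K.x r i * u a = u a * K.x (t a) (j a)) ∧
    (∀ a, K.x (t a) (j a) * v a = v a * K.x r i) ∧
    K.e i = ∑ a, u a * v a


/-- The sequence `i' i_r i_{r+2} i'' i_r`: the upper of the two stacked strands
`i_r i_r` is pulled to the far right past `i_{r+2}` and `i''`. -/
def stackPull {m : ℕ} (r : ℕ) (hr : r + 1 < m) (q : Fin m → ℤ) :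
    Fin m → ℤ := fun k =>
  if k.val ≤ r then q k
  else if h : k.val + 1 < m then q ⟨k.val + 1, h⟩
  else q ⟨r, by omega⟩


/-- Partial pull: the strand from position `r+1` is moved to position `s`. -/
def pt {m : ℕ} (r : ℕ) (hr : r < m) (q : Fin m → ℤ) (s : ℕ) : Fin m → ℤ := fun k =>
  if k.val ≤ r then q k
  else if h : k.val < s ∧ k.val + 1 < m then q ⟨k.val + 1, h.2⟩
  else if k.val = s then q ⟨r, hr⟩
  else q k

theorem pt_start {m : ℕ} (r : ℕ) (hr : r + 1 < m) (q : Fin m → ℤ)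
    (hrr : q ⟨r, by omega⟩ = q ⟨r + 1, hr⟩) : pt r (by omega) q (r + 1) = q := by
  funext k
  unfold pt
  split_ifs with h1 h2 h3
  · rfl
  · omega
  · rw [hrr]; congr 1; exact Fin.ext h3.symm
  · rfl

theorem pt_end {m : ℕ} (r : ℕ) (hr : r + 1 < m) (q : Fin m → ℤ) :
    pt r (by omega) q (m - 1) = stackPull r hr q := by
  funext k
  have := k.2
  unfold pt stackPull
  split_ifs <;> first | rfl | omega

theorem swap_pt {m : ℕ} (r : ℕ) (hr : r < m) (q : Fin m → ℤ) (s : ℕ) (hs : r < s)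
    (hsm : s + 1 < m) : swapSeq s (pt r hr q s) = pt r hr q (s + 1) := by
  funext k
  have hk := k.2
  unfold swapSeq
  rw [dif_pos hsm]
  have hs0 : s < m := by omega
  by_cases h1 : k = ⟨s, hs0⟩
  · subst h1
    rw [Equiv.swap_apply_left]
    unfold pt
    simp [hsm]
    intros; omega
  · by_cases h2 : k = ⟨s + 1, hsm⟩
    · subst h2
      rw [Equiv.swap_apply_right]
      unfold pt
      simp
      try split_ifs <;> first | rfl | omega
    · rw [Equiv.swap_apply_of_ne_of_ne h1 h2]
      have h1' : k.val ≠ s := fun h => h1 (Fin.ext h)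
      have h2' : k.val ≠ s + 1 := fun h => h2 (Fin.ext h)
      unfold pt
      split_ifs <;> first | rfl | omega

theorem swap_swap {m : ℕ} (s : ℕ) (q : Fin m → ℤ) : swapSeq s (swapSeq s q) = q := by
  funext k
  unfold swapSeq
  by_cases h : s + 1 < m <;> simp [h]

theorem swap_same {m : ℕ} (s : ℕ) (h : s + 1 < m) (q : Fin m → ℤ)
    (hq : q ⟨s, by omega⟩ = q ⟨s + 1, h⟩) : swapSeq s q = q := by
  funext k
  unfold swapSeq
  rw [dif_pos h]
  by_cases h1 : k = ⟨s, by omega⟩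
  · subst h1
    rw [Equiv.swap_apply_left, hq]
  · by_cases h2 : k = ⟨s + 1, h⟩
    · subst h2
      rw [Equiv.swap_apply_right, hq]
    · rw [Equiv.swap_apply_of_ne_of_ne h1 h2]

/-- Position of the last strand of the original sequence after pulling to `s`. -/
def tauPos (m : ℕ) (hm : 2 ≤ m) (s : ℕ) : Fin m :=
  if s + 1 < m then ⟨m - 1, by omega⟩ else ⟨m - 2, by omega⟩

/-- A crossing of distinct colours slides the tracked dot, upwards. -/
theorem slide_up {m : ℕ} {A : Type} [Ring A] (K : KLR ℤ adjZ m A) (hm : 2 ≤ m)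
    (s : ℕ) (hsm : s + 1 < m) (p : Fin m → ℤ)
    (hne : p ⟨s, by omega⟩ ≠ p ⟨s + 1, hsm⟩) :
    K.x (tauPos m hm (s + 1)) (swapSeq s p) * K.δ s p = K.δ s p * K.x (tauPos m hm s) p := by
  by_cases h : s + 2 < m
  · have h1 : tauPos m hm (s + 1) = ⟨m - 1, by omega⟩ := if_pos h
    have h2 : tauPos m hm s = ⟨m - 1, by omega⟩ := if_pos hsm
    rw [h1, h2]
    exact (K.δx_far s _ p (by simp; omega) (by simp; omega)).symm
  · have h1 : tauPos m hm (s + 1) = ⟨s, by omega⟩ := by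
      unfold tauPos; rw [if_neg h]; exact Fin.ext (by simp; omega)
    have h2 : tauPos m hm s = ⟨s + 1, by omega⟩ := by
      unfold tauPos; rw [if_pos hsm]; exact Fin.ext (by simp; omega)
    rw [h1, h2]
    exact (K.δx_diff2 s hsm p hne).symm

/-- A crossing of distinct colours slides the tracked dot, downwards. -/
theorem slide_down {m : ℕ} {A : Type} [Ring A] (K : KLR ℤ adjZ m A) (hm : 2 ≤ m)
    (s : ℕ) (hsm : s + 1 < m) (p : Fin m → ℤ)
    (hne : p ⟨s, by omega⟩ ≠ p ⟨s + 1, hsm⟩) :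
    K.x (tauPos m hm s) (swapSeq s p) * K.δ s p = K.δ s p * K.x (tauPos m hm (s + 1)) p := by
  by_cases h : s + 2 < m
  · have h1 : tauPos m hm (s + 1) = ⟨m - 1, by omega⟩ := if_pos h
    have h2 : tauPos m hm s = ⟨m - 1, by omega⟩ := if_pos hsm
    rw [h1, h2]
    exact (K.δx_far s _ p (by simp; omega) (by simp; omega)).symm
  · have h1 : tauPos m hm (s + 1) = ⟨s, by omega⟩ := by
      unfold tauPos; rw [if_neg h]; exact Fin.ext (by simp; omega)
    have h2 : tauPos m hm s = ⟨s + 1, by omega⟩ := by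
      unfold tauPos; rw [if_pos hsm]; exact Fin.ext (by simp; omega)
    rw [h1, h2]
    exact (K.δx_diff1 s hsm p hne).symm

theorem pt_at {m : ℕ} (r : ℕ) (hr : r < m) (q : Fin m → ℤ) (s : ℕ) (hs : r < s)
    (hsm : s < m) : pt r hr q s ⟨s, hsm⟩ = q ⟨r, hr⟩ := by
  unfold pt
  rw [if_neg (by simp; omega), dif_neg (by simp), if_pos rfl]

theorem pt_at_succ {m : ℕ} (r : ℕ) (hr : r < m) (q : Fin m → ℤ) (s : ℕ) (hs : r < s)
    (hsm : s + 1 < m) : pt r hr q s ⟨s + 1, hsm⟩ = q ⟨s + 1, hsm⟩ := by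
  unfold pt
  rw [if_neg (by simp; omega), dif_neg (by simp), if_neg (by simp)]

/-- Pulling the strand past the tail is invertible and slides the tracked dot. -/
theorem pull_exists {m : ℕ} {A : Type} [Ring A] (K : KLR ℤ adjZ m A) (hm2 : 2 ≤ m)
    (q : Fin m → ℤ) (r : ℕ) (hr : r < m)
    (htail : ∀ k : Fin m, r + 3 ≤ k.val → 2 ≤ (q k - q ⟨r, hr⟩).natAbs)
    (s : ℕ) (hs : r + 2 ≤ s) (hsm : s < m) :
    ∃ P P' : A,
      K.e (pt r hr q s) * P = P ∧ P' * K.e (pt r hr q s) = P' ∧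
      P' * P = K.e (pt r hr q (r + 2)) ∧
      K.x (tauPos m hm2 s) (pt r hr q s) * P =
        P * K.x (tauPos m hm2 (r + 2)) (pt r hr q (r + 2)) ∧
      K.x (tauPos m hm2 (r + 2)) (pt r hr q (r + 2)) * P' =
        P' * K.x (tauPos m hm2 s) (pt r hr q s) := by
  induction s, hs using Nat.le_induction with
  | base =>
    refine ⟨K.e (pt r hr q (r + 2)), K.e (pt r hr q (r + 2)), ?_, ?_, ?_, ?_, ?_⟩
    · simp [K.e_mul_e]
    · simp [K.e_mul_e]
    · simp [K.e_mul_e]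
    · rw [K.e_mul_x, K.x_mul_e]
    · rw [K.e_mul_x, K.x_mul_e]
  | succ s hs ih =>
    obtain ⟨P, P', h1, h2, h3, h4, h5⟩ := ih (by omega)
    have hsw := swap_pt r hr q s (by omega) hsm
    have hsw' : swapSeq s (pt r hr q (s + 1)) = pt r hr q s := by
      rw [← hsw, swap_swap]
    have ht := htail ⟨s + 1, hsm⟩ (by simp; omega)
    have ha := pt_at r hr q s (by omega) (by omega)
    have hb := pt_at_succ r hr q s (by omega) hsm
    have hne : pt r hr q s ⟨s, by omega⟩ ≠ pt r hr q s ⟨s + 1, hsm⟩ := by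
      rw [ha, hb]; intro h; rw [h] at ht; simp at ht
    have hna : ¬ adjZ (pt r hr q s ⟨s, by omega⟩) (pt r hr q s ⟨s + 1, hsm⟩) := by
      rw [ha, hb]; unfold adjZ; omega
    have hne' : pt r hr q (s + 1) ⟨s, by omega⟩ ≠ pt r hr q (s + 1) ⟨s + 1, hsm⟩ := by
      rw [← hsw]; unfold swapSeq; simp only [dif_pos hsm]
      rw [Equiv.swap_apply_left, Equiv.swap_apply_right]; exact hne.symm
    have hup := slide_up K hm2 s hsm _ hne
    have hdn := slide_down K hm2 s hsm _ hne'
    have hdd := K.δδ_orth s hsm _ hne hna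
    have he1 := K.e_mul_δ s (pt r hr q s)
    have he2 := K.δ_mul_e s (pt r hr q (s + 1))
    rw [hsw] at hup hdd he1
    rw [hsw'] at hdn
    refine ⟨K.δ s (pt r hr q s) * P, P' * K.δ s (pt r hr q (s + 1)), ?_, ?_, ?_, ?_, ?_⟩
    · rw [← mul_assoc, he1]
    · rw [mul_assoc, he2]
    · rw [mul_assoc, ← mul_assoc (K.δ s _), hdd, h1, h3]
    · rw [← mul_assoc, hup, mul_assoc, h4, mul_assoc]
    · rw [← mul_assoc, h5, mul_assoc, hdn, mul_assoc]

theorem stack_algebra {A : Type} [Ring A] (E d x1 x3 x2 : A)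
    (hdd : d * d = 0) (h2 : x1 * d - d * x2 = E) (h3 : d * x3 = x3 * d) (hE : E * d = d) :
    E = -((x1 + x3) * d * (x2 + x3) * d) + -(d * (x2 + x3)) := by
  have e1 : d * x2 = x1 * d - E := by rw [← h2]; abel
  have e2 : d * (x2 + x3) * d = -d := by
    rw [mul_add, add_mul, e1, h3, sub_mul, mul_assoc, mul_assoc, hdd, hE]; simp
  have e3 : (x1 + x3) * d * (x2 + x3) * d = (x1 + x3) * (d * (x2 + x3) * d) := by
    simp only [mul_assoc]
  rw [e3, e2, mul_add, e1, h3]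
  noncomm_ring

theorem stack_factor {m : ℕ} {A : Type} [Ring A]
    (K : KLR ℤ adjZ m A) (q : Fin m → ℤ) (r : ℕ) (hm : r + 4 ≤ m)
    (hrr : q ⟨r, by omega⟩ = q ⟨r + 1, by omega⟩)
    (hadj : (q ⟨r + 2, by omega⟩ - q ⟨r, by omega⟩).natAbs = 1)
    (htail : ∀ k : Fin m, r + 3 ≤ k.val → 2 ≤ (q k - q ⟨r, by omega⟩).natAbs) :
    RFactorization K q ⟨m - 1, by omega⟩
      ![stackPull r (by omega) q, stackPull r (by omega) q]
      ![⟨m - 2, by omega⟩, ⟨m - 2, by omega⟩] := by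
  have hr : r < m := by omega
  have hm2 : 2 ≤ m := by omega
  obtain ⟨P, P', h1, h2, h3, h4, h5⟩ :=
    pull_exists K hm2 q r hr htail (m - 1) (by omega) (by omega)
  have ht1 : tauPos m hm2 (m - 1) = ⟨m - 2, by omega⟩ := by
    unfold tauPos; exact if_neg (by omega)
  have ht2 : tauPos m hm2 (r + 2) = ⟨m - 1, by omega⟩ := by
    unfold tauPos; exact if_pos (by omega)
  rw [pt_end r (by omega)] at h1 h2 h4 h5
  rw [ht1, ht2] at h4 h5
  have hsw : swapSeq (r + 1) q = pt r hr q (r + 2) := by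
    have := swap_pt r hr q (r + 1) (by omega) (by omega)
    rwa [pt_start r (by omega) q hrr] at this
  have hsw' : swapSeq (r + 1) (pt r hr q (r + 2)) = q := by
    rw [← hsw, swap_swap]
  have hss : swapSeq r q = q := swap_same r (by omega) q hrr
  have hGF := K.δδ_adj (r + 1) (by omega) q (by
    unfold adjZ; rw [← hrr, ← Int.natAbs_neg, neg_sub]; exact hadj)
  have hdd := K.δδ_same r (by omega) q hrr
  have hx2 := K.δx_same2 r (by omega) q hrr
  have hx3 := K.δx_far r ⟨r + 2, by omega⟩ q (by simp) (by simp)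
  have hxm := K.δx_far r ⟨m - 1, by omega⟩ q (by simp; omega) (by simp; omega)
  have hxF := K.δx_far (r + 1) ⟨m - 1, by omega⟩ q (by simp; omega) (by simp; omega)
  have hxG := K.δx_far (r + 1) ⟨m - 1, by omega⟩ (pt r hr q (r + 2))
    (by simp; omega) (by simp; omega)
  have hEd := K.e_mul_δ r q
  have hdE := K.δ_mul_e r q
  have hEF := K.e_mul_δ (r + 1) q
  have hFE := K.δ_mul_e (r + 1) q
  have hEE : K.e q * K.e q = K.e q := by simp [K.e_mul_e]
  have hc1 := K.x_mul_x ⟨m - 1, by omega⟩ ⟨r, by omega⟩ q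
  have hc3 := K.x_mul_x ⟨m - 1, by omega⟩ ⟨r + 2, by omega⟩ q
  have hE1 := K.e_mul_x ⟨r, by omega⟩ q
  have hE3 := K.e_mul_x ⟨r + 2, by omega⟩ q
  rw [hss] at hdd hx2 hx3 hxm hEd
  rw [hsw] at hGF hxF hEF
  rw [hsw'] at hxG
  have key := stack_algebra _ _ _ _ _ hdd hx2 hx3 hEd
  generalize hd : K.δ r q = d at *
  generalize hF : K.δ (r + 1) q = F at *
  generalize hG : K.δ (r + 1) (pt r hr q (r + 2)) = G at *
  generalize hJ : K.e (stackPull r (by omega) q) = J at *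
  generalize hX : K.x ⟨m - 1, by omega⟩ q = X at *
  generalize hY : K.x ⟨m - 1, by omega⟩ (pt r hr q (r + 2)) = Y at *
  generalize hZ : K.x ⟨m - 2, by omega⟩ (stackPull r (by omega) q) = Z at *
  generalize hx1d : K.x ⟨r, by omega⟩ q = x1 at *
  generalize hx2d : K.x ⟨r + 1, by omega⟩ q = x2 at *
  generalize hx3d : K.x ⟨r + 2, by omega⟩ q = x3 at *
  have hu : X * (d * G * P') = d * G * P' * Z := by
    calc X * (d * G * P') = (X * d) * G * P' := by simp only [mul_assoc]
      _ = d * (X * G) * P' := by rw [← hxm]; simp only [mul_assoc]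
      _ = d * G * (Y * P') := by rw [← hxG]; simp only [mul_assoc]
      _ = _ := by rw [h5]; simp only [mul_assoc]
  have hv : Z * (P * F) = P * F * X := by
    rw [← mul_assoc, h4, mul_assoc, ← hxF, mul_assoc]
  have hEu : K.e q * (d * G * P') = d * G * P' := by
    rw [← mul_assoc, ← mul_assoc, hEd]
  have huJ : d * G * P' * J = d * G * P' := by rw [mul_assoc, h2]
  have hJv : J * (P * F) = P * F := by rw [← mul_assoc, h1]
  have hcX : X * (x1 + x3) = (x1 + x3) * X := by rw [mul_add, add_mul, hc1, hc3]
  have hEs : K.e q * (x1 + x3) = x1 + x3 := by rw [mul_add, hE1, hE3]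
  have hmid : d * G * P' * (P * F) = d * (x2 + x3) := by
    calc d * G * P' * (P * F) = d * G * ((P' * P) * F) := by simp only [mul_assoc]
      _ = d * (G * F) := by rw [h3, hEF, mul_assoc]
      _ = _ := by rw [hGF]
  refine ⟨![-((x1 + x3) * (d * G * P')), -(d * G * P')], ![P * F * d, P * F], ?_, ?_, ?_, ?_, ?_⟩
  · intro a
    fin_cases a
    · change -((x1 + x3) * (d * G * P')) = K.e q * -((x1 + x3) * (d * G * P')) * K.e (stackPull r (by omega) q)
      rw [hJ, mul_neg, neg_mul, ← mul_assoc (K.e q), hEs, mul_assoc (x1 + x3), huJ]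
    · change -(d * G * P') = K.e q * -(d * G * P') * K.e (stackPull r (by omega) q)
      rw [hJ, mul_neg, neg_mul, hEu, huJ]
  · intro a
    fin_cases a
    · change P * F * d = K.e (stackPull r (by omega) q) * (P * F * d) * K.e q
      rw [hJ, ← mul_assoc J, hJv, mul_assoc _ d, hdE]
    · change P * F = K.e (stackPull r (by omega) q) * (P * F) * K.e q
      rw [hJ, hJv, mul_assoc, hFE]
  · intro a
    fin_cases a
    · change K.x ⟨m - 1, by omega⟩ q * -((x1 + x3) * (d * G * P')) =
        -((x1 + x3) * (d * G * P')) * K.x ⟨m - 2, by omega⟩ (stackPull r (by omega) q)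
      rw [hX, hZ, mul_neg, neg_mul, ← mul_assoc X, hcX, mul_assoc, hu, mul_assoc (x1 + x3)]
    · change K.x ⟨m - 1, by omega⟩ q * -(d * G * P') =
        -(d * G * P') * K.x ⟨m - 2, by omega⟩ (stackPull r (by omega) q)
      rw [hX, hZ, mul_neg, neg_mul, hu]
  · intro a
    fin_cases a
    · change K.x ⟨m - 2, by omega⟩ (stackPull r (by omega) q) * (P * F * d) =
        P * F * d * K.x ⟨m - 1, by omega⟩ q
      rw [hX, hZ, ← mul_assoc Z, hv, mul_assoc, ← hxm, mul_assoc (P * F)]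
    · change K.x ⟨m - 2, by omega⟩ (stackPull r (by omega) q) * (P * F) =
        P * F * K.x ⟨m - 1, by omega⟩ q
      rw [hX, hZ, hv]
  · rw [Fin.sum_univ_two]
    simp only [Matrix.cons_val_zero, Matrix.cons_val_one, neg_mul]
    rw [hmid, mul_assoc (x1 + x3), ← mul_assoc (d * G * P'), hmid]
    rw [key]
    simp only [mul_assoc]

theorem pow_of_factor {m : ℕ} {A : Type} [Ring A] (K : KLR ℤ adjZ m A)
    (q j : Fin m → ℤ) (s t : Fin m)
    (h : RFactorization K q s ![j, j] ![t, t]) (b : ℕ) (hb : K.x t j ^ b * K.e j = 0) :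
    K.x s q ^ b * K.e q = 0 := by
  obtain ⟨u, v, h1, h2, h3, h4, h5⟩ := h
  rw [h5, Finset.mul_sum]
  apply Finset.sum_eq_zero
  intro a _
  have hj : (![j, j] : Fin 2 → _) a = j := by fin_cases a <;> rfl
  have ht : (![t, t] : Fin 2 → _) a = t := by fin_cases a <;> rfl
  have h3a := h3 a
  have h2a := h2 a
  rw [hj, ht] at h3a
  rw [hj] at h2a
  have hs : ∀ b : ℕ, K.x s q ^ b * u a = u a * K.x t j ^ b := by
    intro b
    exact (SemiconjBy.pow_right (show SemiconjBy (u a) (K.x t j) (K.x s q) from h3a.symm) b).symm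
  rw [← mul_assoc, hs, h2a, mul_assoc, ← mul_assoc (K.x t j ^ b), ← mul_assoc (K.x t j ^ b), hb]
  simp

theorem trapped_eq (l : List ℤ) (r : ℕ) (hl : r + 2 < l.length)
    (hrr : l.getD r 0 = l.getD (r + 1) 0) :
    trappedRunners l (l.length - 1) = trappedRunners (l.eraseIdx (r + 1)) (l.length - 2) := by
  have hlen : (l.eraseIdx (r + 1)).length = l.length - 1 :=
    List.length_eraseIdx_of_lt (by omega)
  have hget : ∀ k, (l.eraseIdx (r + 1)).getD k 0 = l.getD (if k < r + 1 then k else k + 1) 0 := by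
    intro k
    simp only [List.getD_eq_getElem?_getD, List.getElem?_eraseIdx]
    split_ifs <;> rfl
  have hget' : ∀ k, l.getD k 0 = (l.eraseIdx (r + 1)).getD (if k ≤ r then k else k - 1) 0 := by
    intro k
    rw [hget]
    by_cases h1 : k ≤ r
    · rw [if_pos h1, if_pos (by omega)]
    · rw [if_neg h1]
      by_cases h2 : k = r + 1
      · subst h2; rw [← hrr, Nat.add_sub_cancel, if_pos (Nat.lt_succ_self r)]
      · rw [if_neg (by omega), show k - 1 + 1 = k by omega]
  have up : ∀ k, Trapped (l.eraseIdx (r + 1)) (l.length - 2) k →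
      Trapped l (l.length - 1) (if k < r + 1 then k else k + 1) := by
    intro k hk
    have := Relation.ReflTransGen.lift (r := HeapRel (l.eraseIdx (r + 1))) (p := HeapRel l)
      (fun k => if k < r + 1 then k else k + 1) (by
        rintro a b ⟨h1, h2, h3⟩
        rw [hget, hget] at h3
        rw [hlen] at h2
        exact ⟨by dsimp only; split_ifs <;> omega, by dsimp only; split_ifs <;> omega, h3⟩) _ _ hk
    dsimp only [Function.onFun] at this
    rw [if_neg (show ¬ l.length - 2 < r + 1 by omega),
      show l.length - 2 + 1 = l.length - 1 by omega] at this
    exact this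
  have down : ∀ k, Trapped l (l.length - 1) k →
      Trapped (l.eraseIdx (r + 1)) (l.length - 2) (if k ≤ r then k else k - 1) := by
    intro k hk
    have := Relation.ReflTransGen.lift' (r := HeapRel l) (p := HeapRel (l.eraseIdx (r + 1)))
      (fun k => if k ≤ r then k else k - 1) (by
        rintro a b ⟨h1, h2, h3⟩
        by_cases hab : (if a ≤ r then a else a - 1) = (if b ≤ r then b else b - 1)
        · dsimp only [Function.onFun]; rw [hab]
        · rw [hget' a, hget' b] at h3
          refine Relation.ReflTransGen.single ⟨?_, ?_, h3⟩
          · dsimp only; split_ifs at hab ⊢ <;> omega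
          · rw [hlen]; dsimp only; split_ifs <;> omega) _ _ hk
    dsimp only [Function.onFun] at this
    rw [if_neg (show ¬ l.length - 1 ≤ r by omega),
      show l.length - 1 - 1 = l.length - 2 by omega] at this
    exact this
  unfold trappedRunners
  ext z
  simp only [Finset.mem_image, Finset.mem_filter, Finset.mem_range, hlen]
  constructor
  · rintro ⟨k, ⟨hk, ht⟩, rfl⟩
    exact ⟨_, ⟨by split_ifs <;> omega, down k ht⟩, (hget' k).symm⟩
  · rintro ⟨k, ⟨hk, ht⟩, rfl⟩
    exact ⟨_, ⟨by split_ifs <;> omega, up k ht⟩, (hget k).symm⟩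

/-- Let `i = i' i_r i_r i_{r+2} i''` with `i_r · i_{r+2} = -1`
and `i_r` not adjacent (nor equal) to any entry of `i''`.  Then `i` has an
`m`-factorization through two copies of the sequence `j = i' i_r i_{r+2} i'' i_r`;
consequently, if `x^b = 0` for the strand of `j` corresponding to the last strand
of `i`, then `x_{m,i}^b = 0` in `R_ν^Λ`; moreover the antigravity bounds of `i`
and of `i' i_r i_{r+2} i''` (which are related by a stack move) coincide. -/
theorem stack_move_factorization {m : ℕ} {A : Type} [Ring A] {Λ : ℤ →₀ ℕ}
    (K : CycKLR ℤ adjZ m A Λ) (q : Fin m → ℤ) (r : ℕ) (hm : r + 3 < m)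
    (hrr : q ⟨r, by omega⟩ = q ⟨r + 1, by omega⟩)
    (hadj : (q ⟨r + 2, by omega⟩ - q ⟨r, by omega⟩).natAbs = 1)
    (htail : ∀ k : Fin m, r + 3 ≤ k.val → 2 ≤ (q k - q ⟨r, by omega⟩).natAbs) :
    RFactorization K.toKLR q ⟨m - 1, by omega⟩
      ![stackPull r (by omega) q, stackPull r (by omega) q]
      ![⟨m - 2, by omega⟩, ⟨m - 2, by omega⟩] ∧
    (∀ b : ℕ,
      K.x ⟨m - 2, by omega⟩ (stackPull r (by omega) q) ^ b *
          K.e (stackPull r (by omega) q) = 0 →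
        K.x ⟨m - 1, by omega⟩ q ^ b * K.e q = 0) ∧
    agBound Λ (List.ofFn q) (m - 1) =
      agBound Λ ((List.ofFn q).eraseIdx (r + 1)) (m - 2) := by
  have hf := stack_factor K.toKLR q r hm hrr hadj htail
  refine ⟨hf, fun b hb => pow_of_factor K.toKLR q _ _ _ hf b hb, ?_⟩
  have := trapped_eq (List.ofFn q) r (by simp; omega) (by
    rw [List.getD_eq_getElem _ _ (by simp; omega), List.getD_eq_getElem _ _ (by simp; omega)]
    simpa using hrr)
  rw [List.length_ofFn] at this
  unfold agBound
  rw [this]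

end KLRPaper
end
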